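/- arXiv:2209.11454 — 4 statements merged into one kernel-verified Lean document; each statement's English description precedes it below -/
import Mathlib

section
/- Let k ≥ 2 be an integer, let ϱ ∈ ℍ, let a ∈ ℝ be a real number, and let h be holomorphic on an open disc B(ϱ, r) ⊂ ℍ. Define f(z) := a·((z−ϱ)(z−conj(ϱ))/(ϱ−conj(ϱ)))^{−k} + h(z) for z ∈ B(ϱ, r) ∖ {ϱ}. Let A, B, C ∈ ℝ with B² − 4AC > 0. Then for every 0 < ε < r one has Re( i^{k−1} ∮_{|z−ϱ|=ε} f(z)·(Az² + Bz + C)^{k−1} dz ) = 0, where the integral is taken once counterclockwise around the circle of radius ε centered at ϱ. -/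
open Complex ComplexConjugate Metric Set MeasureTheory

noncomputable section

/-- The upper half-plane, as a subset of `ℂ`. -/
def UH : Set ℂ := {z | 0 < z.im}

/-- The elliptic pole term `((z−ϱ)(z−conj ϱ)/(ϱ−conj ϱ))^(−k)`. -/
def polePart (k : ℕ) (ϱ z : ℂ) : ℂ :=
  ((z - ϱ) * (z - conj ϱ) / (ϱ - conj ϱ)) ^ (-(k : ℤ))

/-!
In the coordinate `w = (z - ϱ) / (z - conj ϱ)` the pole sits at `w = 0`, and a polynomial `P` of
degree at most `2n` becomes `(1 - w) ^ (-2n) q(w)` with `deg q ≤ 2n`. The pole term of order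
`n + 1` times `P(z) dz` is then `(ϱ - conj ϱ) ^ (-n) q(w) w ^ (-(n + 1)) dw`, so its integral is
`2πi (ϱ - conj ϱ) ^ (-n)` times the middle coefficient of `q`. Complex conjugation exchanges
`w = 0` and `w = ∞`; if `P` is real, the coefficients of `q` read backwards are therefore their
conjugates and the middle one is real. As `ϱ - conj ϱ` is purely imaginary, multiplying by `i ^ n`
leaves a real multiple of `i`.
-/

section MobiusPullback

open Polynomial

theorem reflect_pow {R : Type*} [Semiring R] {p : R[X]} {N : ℕ} (hp : p.natDegree ≤ N) (n : ℕ) :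
    reflect (n * N) (p ^ n) = reflect N p ^ n := by
  induction n with
  | zero => simp
  | succ n ih =>
    rw [pow_succ, Nat.succ_mul, reflect_mul _ _ (natDegree_pow_le_of_le n hp) hp, ih, pow_succ]

theorem natDegree_C_sub_C_mul_X_pow_le {R : Type*} [Ring R] (a b : R) (m : ℕ) :
    ((C a - C b * X) ^ m).natDegree ≤ m :=
  (natDegree_pow_le_of_le m (by compute_degree)).trans_eq (mul_one m)

theorem reflect_C_sub_C_mul_X_pow {R : Type*} [Ring R] (a b : R) (m : ℕ) :
    reflect m ((C a - C b * X) ^ m) = (-1) ^ m * (C b - C a * X) ^ m := by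
  have natDegree_le : (C a - C b * X).natDegree ≤ 1 := by compute_degree
  have reflect_linear : reflect 1 (C a - C b * X) = -(C b - C a * X) := by
    simp [reflect_sub, reflect_C, reflect_C_mul]
  simpa only [mul_one, reflect_linear, neg_pow (C b - C a * X)] using reflect_pow natDegree_le m

theorem natDegree_quadratic_pow_le {R : Type*} [Semiring R] (a b c : R) (n : ℕ) :
    ((C a * X ^ 2 + C b * X + C c) ^ n).natDegree ≤ 2 * n :=
  (natDegree_pow_le_of_le n natDegree_quadratic_le).trans_eq (mul_comm n 2)

/-- For `P` of degree at most `N`, the polynomial `q(w) = (1 - w) ^ N P((ϱ - σ w) / (1 - w))`,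
that is, `P` written in the coordinate `w = (z - ϱ) / (z - σ)` and cleared of denominators. It is
encoded by substituting `(ϱ - σ w, 1 - w)` into the degree `N` homogenization of `P`. -/
def mobiusPullback {R A : Type*} [CommSemiring R] [CommRing A] [Algebra R A] (N : ℕ) (ϱ σ : A)
    (P : R[X]) : A[X] :=
  MvPolynomial.aeval ![C ϱ - C σ * X, 1 - X] (P.homogenize N)

section CommRing

variable {R A : Type*} [CommSemiring R] [CommRing A] [Algebra R A] {N : ℕ} (ϱ σ : A)

theorem mobiusPullback_C_mul_X_pow (r : R) {m : ℕ} (hm : m ≤ N) :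
    mobiusPullback N ϱ σ (C r * X ^ m) =
      C (algebraMap R A r) * ((C ϱ - C σ * X) ^ m * (1 - X) ^ (N - m)) := by
  simp [mobiusPullback, hm, IsScalarTower.algebraMap_apply R A A[X]]

theorem map_mobiusPullback {B : Type*} [CommRing B] [Algebra R B] (φ : A →ₐ[R] B) (P : R[X]) :
    (mobiusPullback N ϱ σ P).map (φ : A →+* B) = mobiusPullback N (φ ϱ) (φ σ) P := by
  rw [mobiusPullback, ← coe_mapAlgHom, MvPolynomial.comp_aeval_apply, mobiusPullback]
  congr 2
  ext1 i
  fin_cases i <;> simp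

theorem reflect_mobiusPullback {P : R[X]} (hP : P.natDegree ≤ N) :
    reflect N (mobiusPullback N ϱ σ P) = (-1) ^ N * mobiusPullback N σ ϱ P := by
  refine induction_with_natDegree_le
    (fun P ↦ reflect N (mobiusPullback N ϱ σ P) = (-1) ^ N * mobiusPullback N σ ϱ P) N
    (by simp [mobiusPullback]) (fun m r _ hm ↦ ?_) (fun p q _ _ hp hq ↦ ?_) P hP
  · obtain ⟨l, rfl⟩ := Nat.exists_eq_add_of_le hm
    have one_sub_X : (1 - X : A[X]) = C 1 - C 1 * X := by simp
    rw [mobiusPullback_C_mul_X_pow _ _ _ hm, mobiusPullback_C_mul_X_pow _ _ _ hm,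
      Nat.add_sub_cancel_left, reflect_C_mul, one_sub_X,
      reflect_mul _ _ (natDegree_C_sub_C_mul_X_pow_le ϱ σ m) (natDegree_C_sub_C_mul_X_pow_le 1 1 l),
      reflect_C_sub_C_mul_X_pow, reflect_C_sub_C_mul_X_pow]
    ring
  · simp only [mobiusPullback, homogenize_add, map_add, reflect_add] at hp hq ⊢
    rw [hp, hq, mul_add]

theorem map_coeff_mobiusPullback_of_involutive {φ : A →ₐ[R] A} (hφ : Function.Involutive φ)
    {n : ℕ} {P : R[X]} (hP : P.natDegree ≤ 2 * n) :
    φ ((mobiusPullback (2 * n) ϱ (φ ϱ) P).coeff n) =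
      (mobiusPullback (2 * n) ϱ (φ ϱ) P).coeff n := by
  have map_eq_reflect : (mobiusPullback (2 * n) ϱ (φ ϱ) P).map (φ : A →+* A) =
      reflect (2 * n) (mobiusPullback (2 * n) ϱ (φ ϱ) P) := by
    rw [map_mobiusPullback, hφ ϱ, reflect_mobiusPullback _ _ hP, (even_two_mul n).neg_one_pow,
      one_mul]
  have revAt_middle : revAt (2 * n) n = n := by
    rw [revAt_le (by lia)]
    lia
  simpa only [coeff_map, coeff_reflect, revAt_middle, RingHom.coe_coe]
    using congrArg (coeff · n) map_eq_reflect

end CommRing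

theorem eval_mobiusPullback {R K : Type*} [CommSemiring R] [Field K] [Algebra R K] {N : ℕ}
    {ϱ σ z : K} {P : R[X]} (hP : P.natDegree ≤ N) (hzσ : z ≠ σ) (hϱσ : ϱ ≠ σ) :
    (mobiusPullback N ϱ σ P).eval ((z - ϱ) / (z - σ)) =
      aeval z P * ((ϱ - σ) / (z - σ)) ^ N := by
  replace hzσ : z - σ ≠ 0 := sub_ne_zero.mpr hzσ
  replace hϱσ : ϱ - σ ≠ 0 := sub_ne_zero.mpr hϱσ
  set w := (z - ϱ) / (z - σ) with hw
  have one_sub_w : 1 - w = (ϱ - σ) / (z - σ) := by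
    rw [hw]
    field_simp
    ring
  have inverse_mobius : (ϱ - σ * w) / (1 - w) = z := by
    rw [one_sub_w, hw]
    field_simp
    ring
  have eval_eq : (mobiusPullback N ϱ σ P).eval w =
      MvPolynomial.eval ![ϱ - σ * w, 1 - w] ((P.map (algebraMap R K)).homogenize N) := by
    rw [mobiusPullback, homogenize_map, MvPolynomial.eval_map, ← coe_evalRingHom,
      MvPolynomial.map_aeval, MvPolynomial.coe_eval₂Hom]
    congr 1
    · ext
      simp [IsScalarTower.algebraMap_apply R K K[X]]
    · ext i
      fin_cases i <;> simp
  rw [eval_eq, eval_homogenize (natDegree_map_le.trans hP) _ (by simp [one_sub_w, hzσ, hϱσ])]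
  simp only [Matrix.cons_val_zero, Matrix.cons_val_one, inverse_mobius]
  rw [one_sub_w, eval_map_algebraMap]

end MobiusPullback

section MobiusCircleIntegral

variable {c ϱ σ : ℂ} {R : ℝ}

theorem hasDerivAt_mobius_zpow {z : ℂ} (hzϱ : z ≠ ϱ) (hzσ : z ≠ σ) (m : ℤ) :
    HasDerivAt (fun z ↦ ((z - ϱ) / (z - σ)) ^ m)
      (m * ((z - ϱ) / (z - σ)) ^ (m - 1) * ((ϱ - σ) / (z - σ) ^ 2)) z := by
  replace hzϱ : z - ϱ ≠ 0 := sub_ne_zero.mpr hzϱ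
  replace hzσ : z - σ ≠ 0 := sub_ne_zero.mpr hzσ
  have mobius_deriv : HasDerivAt (fun z ↦ (z - ϱ) / (z - σ)) ((ϱ - σ) / (z - σ) ^ 2) z :=
    (((hasDerivAt_id z).sub_const ϱ).div ((hasDerivAt_id z).sub_const σ) hzσ).congr_deriv (by simp)
  exact (hasDerivAt_zpow m _ (Or.inl (div_ne_zero hzϱ hzσ))).comp z mobius_deriv

theorem circleIntegrable_mobius_zpow (hϱ : ϱ ∈ ball c R) (hσ : σ ∉ closedBall c R) (m : ℤ) :
    CircleIntegrable (fun z ↦ ((z - ϱ) / (z - σ)) ^ m / (z - σ) ^ 2) c R := by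
  refine ContinuousOn.circleIntegrable (pos_of_mem_ball hϱ).le fun z hz ↦
    ContinuousAt.continuousWithinAt ?_
  have hzϱ : z ≠ ϱ := sphere_disjoint_ball.ne_of_mem hz hϱ
  have hzσ : z ≠ σ := ne_of_mem_of_not_mem (sphere_subset_closedBall hz) hσ
  exact (hasDerivAt_mobius_zpow hzϱ hzσ m).continuousAt.div (by fun_prop)
    (pow_ne_zero 2 (sub_ne_zero.mpr hzσ))

theorem circleIntegral_mobius_zpow_of_ne (hϱ : ϱ ∈ ball c R) (hσ : σ ∉ closedBall c R) {m : ℤ}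
    (hm : m ≠ -1) : (∮ z in C(c, R), ((z - ϱ) / (z - σ)) ^ m / (z - σ) ^ 2) = 0 := by
  have hm' : (m : ℂ) + 1 ≠ 0 := by exact_mod_cast fun h ↦ hm (eq_neg_of_add_eq_zero_left h)
  have hϱσ : ϱ - σ ≠ 0 :=
    sub_ne_zero.mpr (ne_of_mem_of_not_mem (ball_subset_closedBall hϱ) hσ)
  refine circleIntegral.integral_eq_zero_of_hasDerivWithinAt (pos_of_mem_ball hϱ).le
    (f := fun z ↦ ((z - ϱ) / (z - σ)) ^ (m + 1) / ((m + 1) * (ϱ - σ))) fun z hz ↦ ?_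
  have hzϱ : z ≠ ϱ := sphere_disjoint_ball.ne_of_mem hz hϱ
  have hzσ : z ≠ σ := ne_of_mem_of_not_mem (sphere_subset_closedBall hz) hσ
  refine (((hasDerivAt_mobius_zpow hzϱ hzσ (m + 1)).div_const _).congr_deriv ?_).hasDerivWithinAt
  rw [add_sub_cancel_right]
  push_cast
  field_simp

theorem circleIntegral_mobius_inv (hϱ : ϱ ∈ ball c R) (hσ : σ ∉ closedBall c R) :
    (∮ z in C(c, R), ((z - ϱ) / (z - σ))⁻¹ / (z - σ) ^ 2) = 2 * Real.pi * I / (ϱ - σ) := by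
  have sub_ne_zero_of_mem : ∀ z ∈ closedBall c R, z - σ ≠ 0 := fun z hz ↦
    sub_ne_zero.mpr (ne_of_mem_of_not_mem hz hσ)
  have inv_differentiableOn : DifferentiableOn ℂ (fun z ↦ (z - σ)⁻¹) (closedBall c R) :=
    (differentiableOn_id.sub_const σ).inv sub_ne_zero_of_mem
  rw [div_eq_mul_inv (2 * Real.pi * I), ← smul_eq_mul,
    ← inv_differentiableOn.circleIntegral_sub_inv_smul hϱ]
  refine circleIntegral.integral_congr (pos_of_mem_ball hϱ).le fun z hz ↦ ?_
  have hzσ := sub_ne_zero_of_mem z (sphere_subset_closedBall hz)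
  have hzϱ := sub_ne_zero.mpr (sphere_disjoint_ball.ne_of_mem hz hϱ)
  simp only [smul_eq_mul]
  field_simp

theorem circleIntegral_eval_mobius_mul_zpow (hϱ : ϱ ∈ ball c R) (hσ : σ ∉ closedBall c R)
    (q : Polynomial ℂ) (n : ℕ) :
    (∮ z in C(c, R), q.eval ((z - ϱ) / (z - σ)) *
        (((z - ϱ) / (z - σ)) ^ (-(n + 1 : ℤ)) / (z - σ) ^ 2)) =
      q.coeff n * (2 * Real.pi * I / (ϱ - σ)) := by
  have eval_mul_eq_sum : EqOn
      (fun z ↦ q.eval ((z - ϱ) / (z - σ)) *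
        (((z - ϱ) / (z - σ)) ^ (-(n + 1 : ℤ)) / (z - σ) ^ 2))
      (fun z ↦ ∑ j ∈ q.support, q.coeff j *
        (((z - ϱ) / (z - σ)) ^ (j - (n + 1) : ℤ) / (z - σ) ^ 2)) (sphere c R) := by
    intro z hz
    have mobius_ne_zero : (z - ϱ) / (z - σ) ≠ 0 := div_ne_zero
      (sub_ne_zero.mpr (sphere_disjoint_ball.ne_of_mem hz hϱ))
      (sub_ne_zero.mpr (ne_of_mem_of_not_mem (sphere_subset_closedBall hz) hσ))
    simp only [Polynomial.eval_eq_sum, Polynomial.sum_def, Finset.sum_mul]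
    refine Finset.sum_congr rfl fun j _ ↦ ?_
    rw [sub_eq_add_neg (j : ℤ), zpow_add₀ mobius_ne_zero, zpow_natCast]
    ring
  have integrable_term : ∀ j ∈ q.support, CircleIntegrable (fun z ↦ q.coeff j *
      (((z - ϱ) / (z - σ)) ^ (j - (n + 1) : ℤ) / (z - σ) ^ 2)) c R := fun j _ ↦
    (circleIntegrable_mobius_zpow hϱ hσ _).const_fun_smul (a := q.coeff j)
  rw [circleIntegral.integral_congr (pos_of_mem_ball hϱ).le eval_mul_eq_sum,
    circleIntegral.integral_fun_sum integrable_term, Finset.sum_eq_single n]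
  · rw [circleIntegral.integral_const_mul, sub_add_cancel_left, ← circleIntegral_mobius_inv hϱ hσ]
    simp only [zpow_neg_one]
  · intro j _ hj
    rw [circleIntegral.integral_const_mul, circleIntegral_mobius_zpow_of_ne hϱ hσ (by lia),
      mul_zero]
  · intro hn
    rw [circleIntegral.integral_const_mul, Polynomial.notMem_support_iff.mp hn, zero_mul]

end MobiusCircleIntegral

section PolePart

variable {c ϱ : ℂ} {R : ℝ} {n : ℕ} {P : Polynomial ℝ}

theorem continuousOn_polePart (k : ℕ) (hϱ : ϱ ≠ conj ϱ) :
    ContinuousOn (polePart k ϱ) {ϱ, conj ϱ}ᶜ := by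
  refine ContinuousOn.zpow₀ (by fun_prop) _ fun z hz ↦ Or.inl ?_
  rw [mem_compl_iff, mem_insert_iff, mem_singleton_iff, not_or] at hz
  exact div_ne_zero (mul_ne_zero (sub_ne_zero.mpr hz.1) (sub_ne_zero.mpr hz.2))
    (sub_ne_zero.mpr hϱ)

theorem circleIntegrable_polePart (k : ℕ) (hϱ : ϱ ∈ ball c R) (hϱ' : conj ϱ ∉ closedBall c R) :
    CircleIntegrable (polePart k ϱ) c R := by
  have ϱ_ne_conj : ϱ ≠ conj ϱ := ne_of_mem_of_not_mem (ball_subset_closedBall hϱ) hϱ'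
  refine ((continuousOn_polePart k ϱ_ne_conj).mono fun z hz ↦ ?_).circleIntegrable
    (pos_of_mem_ball hϱ).le
  rw [mem_compl_iff, mem_insert_iff, mem_singleton_iff, not_or]
  exact ⟨sphere_disjoint_ball.ne_of_mem hz hϱ,
    ne_of_mem_of_not_mem (sphere_subset_closedBall hz) hϱ'⟩

theorem polePart_mul_aeval_eq_mobiusPullback {z : ℂ} (hϱ : ϱ ≠ conj ϱ) (hzϱ : z ≠ ϱ)
    (hzϱ' : z ≠ conj ϱ) (hP : P.natDegree ≤ 2 * n) :
    polePart (n + 1) ϱ z * Polynomial.aeval z P =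
      (ϱ - conj ϱ) / (ϱ - conj ϱ) ^ n *
        ((mobiusPullback (2 * n) ϱ (conj ϱ) P).eval ((z - ϱ) / (z - conj ϱ)) *
          (((z - ϱ) / (z - conj ϱ)) ^ (-(n + 1 : ℤ)) / (z - conj ϱ) ^ 2)) := by
  rw [eval_mobiusPullback hP hzϱ' hϱ, polePart, pow_mul]
  replace hϱ := sub_ne_zero.mpr hϱ
  replace hzϱ := sub_ne_zero.mpr hzϱ
  replace hzϱ' := sub_ne_zero.mpr hzϱ'
  generalize z - ϱ = u, z - conj ϱ = v, ϱ - conj ϱ = δ at *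
  rw [← Nat.cast_add_one, zpow_neg, zpow_neg, zpow_natCast, zpow_natCast]
  simp only [div_pow, mul_pow]
  field_simp
  ring

theorem circleIntegral_polePart_mul_aeval (hϱ : ϱ ∈ ball c R) (hϱ' : conj ϱ ∉ closedBall c R)
    (hP : P.natDegree ≤ 2 * n) :
    (∮ z in C(c, R), polePart (n + 1) ϱ z * Polynomial.aeval z P) =
      2 * Real.pi * I * (mobiusPullback (2 * n) ϱ (conj ϱ) P).coeff n / (ϱ - conj ϱ) ^ n := by
  have ϱ_ne_conj : ϱ ≠ conj ϱ := ne_of_mem_of_not_mem (ball_subset_closedBall hϱ) hϱ'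
  rw [circleIntegral.integral_congr (pos_of_mem_ball hϱ).le fun z hz ↦
      polePart_mul_aeval_eq_mobiusPullback ϱ_ne_conj (sphere_disjoint_ball.ne_of_mem hz hϱ)
        (ne_of_mem_of_not_mem (sphere_subset_closedBall hz) hϱ') hP,
    circleIntegral.integral_const_mul, circleIntegral_eval_mobius_mul_zpow hϱ hϱ']
  have sub_conj_ne_zero := sub_ne_zero.mpr ϱ_ne_conj
  field_simp

theorem re_I_pow_mul_circleIntegral_polePart_mul_aeval (hϱ : ϱ ∈ ball c R)
    (hϱ' : conj ϱ ∉ closedBall c R) (hP : P.natDegree ≤ 2 * n) :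
    (I ^ n * ∮ z in C(c, R), polePart (n + 1) ϱ z * Polynomial.aeval z P).re = 0 := by
  obtain ⟨r, hr⟩ : ∃ r : ℝ, (mobiusPullback (2 * n) ϱ (conj ϱ) P).coeff n = r :=
    conj_eq_iff_real.mp
      (map_coeff_mobiusPullback_of_involutive ϱ (φ := conjAe.toAlgHom) conj_conj hP)
  have integral_eq : I ^ n * ∮ z in C(c, R), polePart (n + 1) ϱ z * Polynomial.aeval z P =
      (2 * Real.pi * r / (2 * ϱ.im) ^ n : ℝ) * I := by
    rw [circleIntegral_polePart_mul_aeval hϱ hϱ' hP, hr, sub_conj, mul_pow]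
    push_cast
    field_simp
  rw [integral_eq, re_ofReal_mul, I_re, mul_zero]

end PolePart

theorem conj_notMem_of_subset_UH {ϱ : ℂ} (hϱ : ϱ ∈ UH) {s : Set ℂ} (hs : s ⊆ UH) :
    conj ϱ ∉ s :=
  fun hmem ↦ (neg_neg_of_pos hϱ).not_gt (show 0 < -ϱ.im from hs hmem)

theorem residue_real_part_vanishes_general {c ϱ : ℂ} {R : ℝ} (hϱ : ϱ ∈ ball c R)
    (hϱ' : conj ϱ ∉ closedBall c R) (n : ℕ) (a : ℝ) {h : ℂ → ℂ} (hh : DiffContOnCl ℂ h (ball c R))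
    {P : Polynomial ℝ} (hP : P.natDegree ≤ 2 * n) :
    (I ^ n * ∮ z in C(c, R), (a * polePart (n + 1) ϱ z + h z) * Polynomial.aeval z P).re = 0 := by
  have hR : 0 ≤ R := (pos_of_mem_ball hϱ).le
  have regular : DiffContOnCl ℂ (fun z ↦ h z * Polynomial.aeval z P) (ball c R) :=
    hh.smul P.differentiable_aeval.diffContOnCl
  have regular_integrable : CircleIntegrable (fun z ↦ h z * Polynomial.aeval z P) c R :=
    (regular.continuousOn_ball.mono sphere_subset_closedBall).circleIntegrable hR
  have polar_integrable :
      CircleIntegrable (fun z ↦ a * (polePart (n + 1) ϱ z * Polynomial.aeval z P)) c R :=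
    ((circleIntegrable_polePart (n + 1) hϱ hϱ').mul_continuousOn
      P.continuous_aeval.continuousOn).const_fun_smul (a := (a : ℂ))
  simp only [add_mul, mul_assoc (a : ℂ)]
  rw [circleIntegral.integral_add polar_integrable regular_integrable,
    regular.circleIntegral_eq_zero hR, add_zero, circleIntegral.integral_const_mul,
    mul_left_comm, re_ofReal_mul, re_I_pow_mul_circleIntegral_polePart_mul_aeval hϱ hϱ' hP,
    mul_zero]

/-- Local residue computation: if `f(z) = a·((z−ϱ)(z−conj ϱ)/(ϱ−conj ϱ))^(−k) + h(z)` with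
`a` real, `h` holomorphic on `B(ϱ,r) ⊆ ℍ`, and `A, B, C` real with `B² − 4AC > 0`, then
`Re(i^(k−1)·∮_{|z−ϱ|=ε} f(z)·(Az² + Bz + C)^(k−1) dz) = 0` for all `0 < ε < r`. -/
theorem residue_real_part_vanishes (k : ℕ) (hk : 2 ≤ k) (ϱ : ℂ) (hϱ : ϱ ∈ UH)
    (r : ℝ) (hr : 0 < r) (hball : Metric.ball ϱ r ⊆ UH) (a : ℝ) (h : ℂ → ℂ)
    (hh : DifferentiableOn ℂ h (Metric.ball ϱ r)) (A B C : ℝ)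
    (hD : 0 < B ^ 2 - 4 * A * C) (ε : ℝ) (hε0 : 0 < ε) (hεr : ε < r) :
    (Complex.I ^ (k - 1) *
      ∮ z in C(ϱ, ε), ((a : ℂ) * polePart k ϱ z + h z) *
        ((A : ℂ) * z ^ 2 + (B : ℂ) * z + (C : ℂ)) ^ (k - 1)).re = 0 := by
  obtain ⟨n, rfl⟩ : ∃ n, k = n + 1 := ⟨k - 1, by lia⟩
  have closedBall_subset : closedBall ϱ ε ⊆ ball ϱ r := closedBall_subset_ball hεr
  simpa using residue_real_part_vanishes_general (mem_ball_self hε0)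
    (conj_notMem_of_subset_UH hϱ (closedBall_subset.trans hball)) n a
    (hh.mono (closure_ball_subset_closedBall.trans closedBall_subset)).diffContOnCl
    (natDegree_quadratic_pow_le A B C n)
end
end

section
/- Let k ≥ 1 be an integer, let A, B, C ∈ ℝ with B² − 4AC > 0, and let ϱ ∈ ℍ. Then the value (R_{2−2k}^{k−1} g)(ϱ) of the (k−1)-fold iterated Maass raising operator applied to the function g(z) := (Az² + Bz + C)^{k−1}, evaluated at z = ϱ, is a real number. -/
open Complex ComplexConjugate Metric Set MeasureTheory

noncomputable section

/-- The Wirtinger derivative `∂f/∂z = (1/2)(∂f/∂x − i·∂f/∂y)`. -/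
def dz (f : ℂ → ℂ) (z : ℂ) : ℂ :=
  (1 / 2 : ℂ) * (fderiv ℝ f z 1 - Complex.I * fderiv ℝ f z Complex.I)

/-- The Maass raising operator `R_κ f = 2i·∂f/∂z + (κ/y)·f`. -/
def raise (κ : ℝ) (f : ℂ → ℂ) : ℂ → ℂ :=
  fun z => 2 * Complex.I * dz f z + ((κ / z.im : ℝ) : ℂ) * f z

/-- The iterated raising operator `R_κⁿ = R_{κ+2n−2} ∘ ⋯ ∘ R_{κ+2} ∘ R_κ`. -/
def raiseIter (κ : ℝ) : ℕ → (ℂ → ℂ) → (ℂ → ℂ)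
  | 0 => fun f => f
  | n + 1 => fun f => raise (κ + 2 * n) (raiseIter κ n f)

/-!
Let `p` be a real polynomial of degree at most `N`, with homogenization
`F(X, Y) = ∑ⱼ pⱼ Xʲ Y^(N-j)`, and put `G_z(s) = F(z + s z̄, 1 + s)`, a polynomial in `s`.
Euler's identity for `F` reads `(z - z̄) ∂G/∂z + (1 + s) ∂G/∂s = N G`. Since `z - z̄ = 2iy`,
comparing coefficients of `sⁿ` gives
`R_{2n-N} (y⁻ⁿ [sⁿ]G) = -(n+1) y⁻⁽ⁿ⁺¹⁾ [sⁿ⁺¹]G`, so that `R_{-N}ⁿ p = (-1)ⁿ n! y⁻ⁿ [sⁿ]G`.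
As `F` is real, conjugating the coefficients of `G_z` gives `F(z̄ + s z, 1 + s) = s^N G_z(s⁻¹)`,
which reverses their order; for `N = 2m` the coefficient of `sᵐ` is therefore real.
-/

section

open Polynomial Topology

variable {f' g' z : ℂ} {f g : ℂ → ℂ}

/-- `f` is real-differentiable at `z`, with Wirtinger derivative `∂f/∂z = f'` there. Recording
differentiability rules out the junk value of `dz`. -/
def HasDzAt (f : ℂ → ℂ) (f' z : ℂ) : Prop := DifferentiableAt ℝ f z ∧ dz f z = f'

theorem hasDzAt_of_hasFDerivAt {L : ℂ →L[ℝ] ℂ} (h : HasFDerivAt f L z)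
    (hL : 1 / 2 * (L 1 - I * L I) = f') : HasDzAt f f' z :=
  ⟨h.differentiableAt, by rw [dz, h.fderiv, hL]⟩

theorem hasDzAt_const (c z : ℂ) : HasDzAt (fun _ ↦ c) 0 z :=
  hasDzAt_of_hasFDerivAt (hasFDerivAt_const c z) (by simp)

theorem hasDzAt_id (z : ℂ) : HasDzAt (fun w ↦ w) 1 z :=
  hasDzAt_of_hasFDerivAt (hasFDerivAt_id z) (by norm_num)

theorem hasDzAt_conj (z : ℂ) : HasDzAt (fun w ↦ conj w) 0 z :=
  hasDzAt_of_hasFDerivAt conjCLE.hasFDerivAt (by simp)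

theorem hasDzAt_im (z : ℂ) : HasDzAt (fun w ↦ (w.im : ℂ)) (-I / 2) z :=
  hasDzAt_of_hasFDerivAt (ofRealCLM.comp imCLM).hasFDerivAt (by simp; ring)

namespace HasDzAt

theorem add (hf : HasDzAt f f' z) (hg : HasDzAt g g' z) :
    HasDzAt (fun w ↦ f w + g w) (f' + g') z := by
  refine hasDzAt_of_hasFDerivAt (hf.1.hasFDerivAt.add hg.1.hasFDerivAt) ?_
  rw [← hf.2, ← hg.2, dz, dz, add_apply, add_apply]
  ring

theorem mul (hf : HasDzAt f f' z) (hg : HasDzAt g g' z) :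
    HasDzAt (fun w ↦ f w * g w) (f' * g z + f z * g') z := by
  refine hasDzAt_of_hasFDerivAt (hf.1.hasFDerivAt.mul hg.1.hasFDerivAt) ?_
  simp only [← hf.2, ← hg.2, dz, add_apply, smul_apply, smul_eq_mul]
  ring

theorem hasDerivAt_comp (hf : HasDzAt f f' z) (hg : HasDerivAt g g' (f z)) :
    HasDzAt (fun w ↦ g (f w)) (g' * f') z := by
  refine hasDzAt_of_hasFDerivAt
    ((hg.hasFDerivAt.restrictScalars ℝ).comp z hf.1.hasFDerivAt) ?_
  simp only [← hf.2, dz, ContinuousLinearMap.comp_apply, ContinuousLinearMap.coe_restrictScalars',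
    ContinuousLinearMap.toSpanSingleton_apply, smul_eq_mul]
  ring

theorem sum {ι : Type*} {s : Finset ι} {u : ι → ℂ → ℂ} {u' : ι → ℂ}
    (hu : ∀ i ∈ s, HasDzAt (u i) (u' i) z) :
    HasDzAt (fun w ↦ ∑ i ∈ s, u i w) (∑ i ∈ s, u' i) z := by
  classical
  induction s using Finset.induction_on with
  | empty => simpa using hasDzAt_const 0 z
  | insert i s hi ih =>
    simp only [Finset.sum_insert hi]
    exact (hu i (by simp)).add (ih fun j hj ↦ hu j (by simp [hj]))

end HasDzAt

theorem hasDzAt_inv_im_pow (n : ℕ) (hz : z.im ≠ 0) :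
    HasDzAt (fun w ↦ ((w.im : ℂ) ^ n)⁻¹) (n * I / 2 * ((z.im : ℂ) ^ (n + 1))⁻¹) z := by
  have im_ne : (z.im : ℂ) ≠ 0 := ofReal_ne_zero.2 hz
  convert (hasDzAt_im z).hasDerivAt_comp (hasDerivAt_zpow (-n : ℤ) (z.im : ℂ) (.inl im_ne)) using 1
  · simp only [zpow_neg, zpow_natCast]
  · rw [← neg_add', zpow_neg, zpow_add_one₀ im_ne, zpow_natCast]
    push_cast
    ring

theorem raise_congr {κ : ℝ} (h : f =ᶠ[𝓝 z] g) : raise κ f z = raise κ g z := by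
  rw [raise, raise, dz, dz, h.fderiv_eq, h.eq_of_nhds]

theorem HasDzAt.raise_eq (hf : HasDzAt f f' z) (κ : ℝ) :
    raise κ f z = 2 * I * f' + ((κ / z.im : ℝ) : ℂ) * f z := by
  rw [raise, hf.2]

/-- The polynomial-valued function `G` has coefficientwise Wirtinger derivative `G'` at `z`, so that
generating functions can be differentiated as a whole. -/
def HasPolyDzAt (G : ℂ → ℂ[X]) (G' : ℂ[X]) (z : ℂ) : Prop :=
  ∀ n, HasDzAt (fun w ↦ (G w).coeff n) (G'.coeff n) z

section Homogeneous

variable {G H : ℂ → ℂ[X]} {G' H' : ℂ[X]} {M N : ℕ}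

theorem hasPolyDzAt_const (q : ℂ[X]) (z : ℂ) : HasPolyDzAt (fun _ ↦ q) 0 z :=
  fun n ↦ by simpa using hasDzAt_const (q.coeff n) z

theorem HasDzAt.polynomial_C (hf : HasDzAt f f' z) : HasPolyDzAt (fun w ↦ C (f w)) (C f') z := by
  rintro (_ | n)
  · simpa using hf
  · simpa [coeff_C] using hasDzAt_const 0 z

namespace HasPolyDzAt

theorem add (hG : HasPolyDzAt G G' z) (hH : HasPolyDzAt H H' z) :
    HasPolyDzAt (fun w ↦ G w + H w) (G' + H') z :=
  fun n ↦ by simpa only [coeff_add] using (hG n).add (hH n)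

theorem mul (hG : HasPolyDzAt G G' z) (hH : HasPolyDzAt H H' z) :
    HasPolyDzAt (fun w ↦ G w * H w) (G' * H z + G z * H') z := fun n ↦ by
  simp only [coeff_add, coeff_mul, ← Finset.sum_add_distrib]
  exact HasDzAt.sum fun i _ ↦ (hG i.1).mul (hH i.2)

end HasPolyDzAt

/-- Euler's identity `(z - z̄) ∂G/∂z + (1 + s) ∂G/∂s = N G` at `z`, where `s` is the polynomial
variable. It holds for `G_z(s) = F(z + s z̄, 1 + s)` with `F` a binary form of degree `N`. -/
def SatisfiesEulerAt (N : ℕ) (G : ℂ → ℂ[X]) (z : ℂ) : Prop :=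
  ∃ G', HasPolyDzAt G G' z ∧ C (z - conj z) * G' + (1 + X) * derivative (G z) = (N : ℂ[X]) * G z

theorem satisfiesEulerAt_C (c z : ℂ) : SatisfiesEulerAt 0 (fun _ ↦ C c) z :=
  ⟨0, hasPolyDzAt_const _ z, by simp⟩

theorem satisfiesEulerAt_one_add_X (z : ℂ) : SatisfiesEulerAt 1 (fun _ ↦ 1 + X) z :=
  ⟨0, hasPolyDzAt_const _ z, by simp⟩

theorem satisfiesEulerAt_C_add_conj_mul_X (z : ℂ) :
    SatisfiesEulerAt 1 (fun w ↦ C w + C (conj w) * X) z := by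
  refine ⟨_, (hasDzAt_id z).polynomial_C.add
    ((hasDzAt_conj z).polynomial_C.mul (hasPolyDzAt_const X z)), ?_⟩
  simp only [C_sub, C_0, zero_mul, mul_zero, add_zero, C_1, mul_one, derivative_add, derivative_C,
    derivative_C_mul, derivative_X, zero_add, Nat.cast_one, one_mul]
  ring

namespace SatisfiesEulerAt

theorem add (hG : SatisfiesEulerAt N G z) (hH : SatisfiesEulerAt N H z) :
    SatisfiesEulerAt N (fun w ↦ G w + H w) z := by
  obtain ⟨G', hG', hGN⟩ := hG
  obtain ⟨H', hH', hHN⟩ := hH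
  refine ⟨_, hG'.add hH', ?_⟩
  rw [derivative_add]
  linear_combination hGN + hHN

theorem mul (hG : SatisfiesEulerAt M G z) (hH : SatisfiesEulerAt N H z) :
    SatisfiesEulerAt (M + N) (fun w ↦ G w * H w) z := by
  obtain ⟨G', hG', hGM⟩ := hG
  obtain ⟨H', hH', hHN⟩ := hH
  refine ⟨_, hG'.mul hH', ?_⟩
  rw [derivative_mul]
  push_cast
  linear_combination H z * hGM + G z * hHN

theorem pow (hG : SatisfiesEulerAt N G z) (k : ℕ) :
    SatisfiesEulerAt (k * N) (fun w ↦ G w ^ k) z := by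
  induction k with
  | zero => simpa using satisfiesEulerAt_C 1 z
  | succ k ih => simpa only [pow_succ, Nat.succ_mul] using ih.mul hG

theorem sum {ι : Type*} {s : Finset ι} {u : ι → ℂ → ℂ[X]}
    (hu : ∀ i ∈ s, SatisfiesEulerAt N (u i) z) :
    SatisfiesEulerAt N (fun w ↦ ∑ i ∈ s, u i w) z := by
  classical
  induction s using Finset.induction_on with
  | empty => exact ⟨0, by simpa using hasPolyDzAt_const 0 z, by simp⟩
  | insert i s hi ih =>
    simp only [Finset.sum_insert hi]
    exact (hu i (by simp)).add (ih fun j hj ↦ hu j (by simp [hj]))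

theorem hasDzAt_coeff (hG : SatisfiesEulerAt N G z) (hz : z.im ≠ 0) (n : ℕ) :
    HasDzAt (fun w ↦ (G w).coeff n)
      (((N - n) * (G z).coeff n - (n + 1) * (G z).coeff (n + 1)) / (2 * I * z.im)) z := by
  obtain ⟨G', hG', hGN⟩ := hG
  have coeff_euler : (z - conj z) * G'.coeff n + ((n + 1) * (G z).coeff (n + 1)
      + n * (G z).coeff n) = N * (G z).coeff n := by
    have h := congrArg (coeff · n) hGN
    simp only [coeff_add, add_mul, one_mul, coeff_C_mul, coeff_derivative, coeff_natCast_mul] at h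
    have coeff_X_mul_derivative : (X * derivative (G z)).coeff n = n * (G z).coeff n := by
      cases n <;> simp [coeff_X_mul, coeff_derivative, mul_comm]
    linear_combination h - coeff_X_mul_derivative
  convert hG' n using 1
  rw [sub_conj, ofReal_mul, ofReal_ofNat] at coeff_euler
  rw [div_eq_iff (by simpa using hz)]
  linear_combination -coeff_euler

theorem raise_coeff_mul_inv_im_pow (hG : SatisfiesEulerAt N G z) (hz : z.im ≠ 0) (n : ℕ) (a : ℂ) :
    raise (-N + 2 * n) (fun w ↦ a * ((G w).coeff n * ((w.im : ℂ) ^ n)⁻¹)) z =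
      -(n + 1) * a * ((G z).coeff (n + 1) * ((z.im : ℂ) ^ (n + 1))⁻¹) := by
  have hasDz := (hasDzAt_const a z).mul ((hG.hasDzAt_coeff hz n).mul (hasDzAt_inv_im_pow n hz))
  have im_ne : (z.im : ℂ) ≠ 0 := ofReal_ne_zero.2 hz
  rw [hasDz.raise_eq]
  push_cast
  field_simp
  linear_combination a * n * (G z).coeff n * z.im ^ (n + 1) * I_sq

theorem raiseIter_coeff_zero (hG : ∀ z, SatisfiesEulerAt N G z) (n : ℕ) (hz : z.im ≠ 0) :
    raiseIter (-N) n (fun w ↦ (G w).coeff 0) z =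
      (-1) ^ n * n.factorial * ((G z).coeff n * ((z.im : ℂ) ^ n)⁻¹) := by
  induction n generalizing z with
  | zero => simp [raiseIter]
  | succ n ih =>
    have im_ne_near : ∀ᶠ w in 𝓝 z, w.im ≠ 0 := continuous_im.continuousAt.eventually_ne hz
    change raise _ (raiseIter _ n _) z = _
    rw [raise_congr (im_ne_near.mono fun w hw ↦ ih hw), (hG z).raise_coeff_mul_inv_im_pow hz n,
      Nat.factorial_succ]
    push_cast
    ring

end SatisfiesEulerAt

end Homogeneous

/-- A polynomial of degree at most `N` whose coefficients satisfy `conj qₙ = q_(N-n)`; its middle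
coefficient is then real. Here `N` need not be the exact degree. -/
def IsConjReciprocal (N : ℕ) (q : ℂ[X]) : Prop :=
  q.natDegree ≤ N ∧ reflect N (q.map (starRingEnd ℂ)) = q

theorem isConjReciprocal_C_ofReal (a : ℝ) : IsConjReciprocal 0 (C (a : ℂ)) :=
  ⟨by simp, by simp [reflect_C]⟩

theorem isConjReciprocal_C_add_conj_mul_X (z : ℂ) :
    IsConjReciprocal 1 (C z + C (conj z) * X) := by
  refine ⟨by compute_degree, ?_⟩
  simp [reflect_add, reflect_C, reflect_C_mul, add_comm]

namespace IsConjReciprocal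

variable {M N : ℕ} {p q : ℂ[X]}

theorem add (hp : IsConjReciprocal N p) (hq : IsConjReciprocal N q) :
    IsConjReciprocal N (p + q) :=
  ⟨natDegree_add_le_of_degree_le hp.1 hq.1, by rw [Polynomial.map_add, reflect_add, hp.2, hq.2]⟩

theorem mul (hp : IsConjReciprocal M p) (hq : IsConjReciprocal N q) :
    IsConjReciprocal (M + N) (p * q) :=
  ⟨natDegree_mul_le_of_le hp.1 hq.1, by
    rw [Polynomial.map_mul, reflect_mul _ _ (natDegree_map_le.trans hp.1)
      (natDegree_map_le.trans hq.1), hp.2, hq.2]⟩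

theorem pow (hq : IsConjReciprocal N q) (k : ℕ) : IsConjReciprocal (k * N) (q ^ k) := by
  induction k with
  | zero => simpa using isConjReciprocal_C_ofReal 1
  | succ k ih => simpa only [pow_succ, Nat.succ_mul] using ih.mul hq

theorem sum {ι : Type*} {s : Finset ι} {u : ι → ℂ[X]} (hu : ∀ i ∈ s, IsConjReciprocal N (u i)) :
    IsConjReciprocal N (∑ i ∈ s, u i) :=
  Finset.sum_induction u (IsConjReciprocal N) (fun _ _ ↦ add) ⟨by simp, by simp⟩ hu

theorem conj_coeff_sub (hq : IsConjReciprocal N q) {n : ℕ} (hn : n ≤ N) :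
    conj (q.coeff (N - n)) = q.coeff n := by
  conv_rhs => rw [← hq.2, coeff_reflect, revAt_le hn, coeff_map]

theorem im_coeff_middle {m : ℕ} (hq : IsConjReciprocal (2 * m) q) : (q.coeff m).im = 0 := by
  have h := hq.conj_coeff_sub (n := m) (by omega)
  rwa [two_mul, Nat.add_sub_cancel, conj_eq_iff_im] at h

end IsConjReciprocal

/-- The polynomial `F(z + s z̄, 1 + s)` in `s`, where `F` is the homogenization of `p` as a binary
form of degree `N`.
Coefficients of `p` beyond `N` are discarded. -/
def conjPencil (N : ℕ) (p : ℝ[X]) (z : ℂ) : ℂ[X] :=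
  ∑ j ∈ Finset.range (N + 1), C (p.coeff j : ℂ) * ((C z + C (conj z) * X) ^ j * (1 + X) ^ (N - j))

theorem coeff_zero_conjPencil {N : ℕ} {p : ℝ[X]} (hp : p.natDegree ≤ N) (z : ℂ) :
    (conjPencil N p z).coeff 0 = aeval z p := by
  rw [aeval_eq_sum_range' (Nat.lt_succ_of_le hp)]
  simp [conjPencil, coeff_zero_eq_eval_zero, eval_finsetSum]

theorem satisfiesEulerAt_conjPencil (N : ℕ) (p : ℝ[X]) (z : ℂ) :
    SatisfiesEulerAt N (conjPencil N p) z :=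
  SatisfiesEulerAt.sum fun j hj ↦ by
    have h := (satisfiesEulerAt_C (p.coeff j) z).mul
      (((satisfiesEulerAt_C_add_conj_mul_X z).pow j).mul
        ((satisfiesEulerAt_one_add_X z).pow (N - j)))
    rwa [mul_one, mul_one, zero_add, Nat.add_sub_cancel' (Finset.mem_range_succ_iff.1 hj)] at h

theorem isConjReciprocal_conjPencil (N : ℕ) (p : ℝ[X]) (z : ℂ) :
    IsConjReciprocal N (conjPencil N p z) :=
  IsConjReciprocal.sum fun j hj ↦ by
    have one_add_X : IsConjReciprocal 1 (1 + X) := by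
      simpa using isConjReciprocal_C_add_conj_mul_X 1
    have h := (isConjReciprocal_C_ofReal (p.coeff j)).mul
      (((isConjReciprocal_C_add_conj_mul_X z).pow j).mul (one_add_X.pow (N - j)))
    rwa [mul_one, mul_one, zero_add, Nat.add_sub_cancel' (Finset.mem_range_succ_iff.1 hj)] at h

theorem raiseIter_aeval {N : ℕ} {p : ℝ[X]} (hp : p.natDegree ≤ N) (n : ℕ) (hz : z.im ≠ 0) :
    raiseIter (-N) n (fun w ↦ aeval w p) z =
      (-1) ^ n * n.factorial * ((conjPencil N p z).coeff n * ((z.im : ℂ) ^ n)⁻¹) := by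
  simp_rw [← coeff_zero_conjPencil hp]
  exact SatisfiesEulerAt.raiseIter_coeff_zero (satisfiesEulerAt_conjPencil N p) n hz

theorem raiseIter_quadratic_real_general (m : ℕ) (p : ℝ[X]) (hp : p.natDegree ≤ 2 * m) (z : ℂ)
    (hz : z.im ≠ 0) : (raiseIter (-(2 * m)) m (fun w ↦ aeval w p) z).im = 0 := by
  have middle_real := (isConjReciprocal_conjPencil (2 * m) p z).im_coeff_middle
  have formula := raiseIter_aeval hp m hz
  push_cast at formula
  rw [formula, ← conj_eq_iff_im]
  simp [conj_eq_iff_im.2 middle_real]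

end

/-- For `k ≥ 1`, real `A, B, C` with `B² − 4AC > 0`, and `ϱ` in the upper half-plane,
the value `(R_{2−2k}^{k−1} g)(ϱ)` with `g(z) = (Az² + Bz + C)^(k−1)` is a real number. -/
theorem raiseIter_quadratic_real (k : ℕ) (hk : 1 ≤ k) (A B C : ℝ)
    (hD : 0 < B ^ 2 - 4 * A * C) (ϱ : ℂ) (hϱ : ϱ ∈ UH) :
    (raiseIter ((2 : ℝ) - 2 * k) (k - 1)
      (fun z => ((A : ℂ) * z ^ 2 + (B : ℂ) * z + (C : ℂ)) ^ (k - 1)) ϱ).im = 0 := by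
  have h := raiseIter_quadratic_real_general (k - 1)
    ((.C A * .X ^ 2 + .C B * .X + .C C) ^ (k - 1))
    (Polynomial.natDegree_pow_le_of_le _ Polynomial.natDegree_quadratic_le |>.trans_eq
      (mul_comm _ _)) ϱ hϱ.ne'
  simpa [Nat.cast_sub hk, mul_sub] using h
end
end

section
/- Let k ≥ 2 be an integer, ϱ ∈ ℍ, and let γ ∈ SL₂(ℤ) be primitive hyperbolic. Then for every z₀ ∈ ℍ ∖ SL₂(ℤ)ϱ and every piecewise continuously differentiable path σ in ℍ ∖ SL₂(ℤ)ϱ from z₀ to γz₀, one has Re( (i/√(d_γ))^{k−1} ∫_σ η_{k,ϱ}(z)·Q_γ(z,1)^{k−1} dz ) = 0; that is, the pairing of the Petersson Poincaré series η_{k,ϱ} with every closed geodesic on SL₂(ℤ)∖ℍ vanishes. -/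
open Complex ComplexConjugate Metric Set MeasureTheory

noncomputable section

abbrev SL2Z := Matrix.SpecialLinearGroup (Fin 2) ℤ

/-- The Möbius action `γz = (az+b)/(cz+d)` of `SL₂(ℤ)` on the upper half-plane
(written as a map on `ℂ`). -/
def moeb (γ : SL2Z) (z : ℂ) : ℂ :=
  ((γ.1 0 0 : ℂ) * z + (γ.1 0 1 : ℂ)) / ((γ.1 1 0 : ℂ) * z + (γ.1 1 1 : ℂ))

/-- The `SL₂(ℤ)`-orbit of a point `ϱ`. -/
def orbit (ϱ : ℂ) : Set ℂ := {z | ∃ γ : SL2Z, z = moeb γ ϱ}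

/-- `γ ∈ SL₂(ℤ)` is hyperbolic if `|a + d| > 2`. -/
def IsHyperbolic (γ : SL2Z) : Prop := 2 < |γ.1 0 0 + γ.1 1 1|

/-- `γ ∈ SL₂(ℤ)` is primitive if it is not a power `γ₀^m`, `m ≥ 2`, of another element. -/
def IsPrimitive (γ : SL2Z) : Prop := ¬∃ (γ₀ : SL2Z) (m : ℕ), 2 ≤ m ∧ γ = γ₀ ^ m

/-- The binary quadratic form `Q_γ(z,1) = cz² + (d−a)z − b` attached to `γ`. -/
def Qpoly (γ : SL2Z) (z : ℂ) : ℂ :=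
  (γ.1 1 0 : ℂ) * z ^ 2 + ((γ.1 1 1 - γ.1 0 0 : ℤ) : ℂ) * z - (γ.1 0 1 : ℂ)

/-- The discriminant `d_γ = (a+d)² − 4` of `Q_γ`. -/
def discr (γ : SL2Z) : ℝ := ((γ.1 0 0 + γ.1 1 1 : ℤ) : ℝ) ^ 2 - 4

/-- The factor `(i/√(d_γ))^(k−1)` appearing in the geodesic pairing. -/
def geodFactor (k : ℕ) (γ : SL2Z) : ℂ := (Complex.I / (Real.sqrt (discr γ) : ℂ)) ^ (k - 1)

/-- Complex line integral of `f` along the path `σ : [0,1] → ℂ`. -/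
def pathInt (f : ℂ → ℂ) (σ : ℝ → ℂ) : ℂ := ∫ t in (0 : ℝ)..1, f (σ t) * deriv σ t

/-- `σ : [0,1] → ℂ` is a piecewise continuously differentiable path. -/
def PiecewiseC1 (σ : ℝ → ℂ) : Prop :=
  ContinuousOn σ (Set.Icc 0 1) ∧
    ∃ (n : ℕ) (t : ℕ → ℝ), 0 < n ∧ t 0 = 0 ∧ t n = 1 ∧ (∀ i < n, t i ≤ t (i + 1)) ∧
      ∀ i < n, ContDiffOn ℝ 1 σ (Set.Icc (t i) (t (i + 1)))

/-- A single term of the Petersson Poincaré series: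
`((γz − ϱ)(γz − conj ϱ)/(ϱ − conj ϱ))^(−k) · (cz + d)^(−2k)`. -/
def etaTerm (k : ℕ) (ϱ z : ℂ) (γ : SL2Z) : ℂ :=
  ((moeb γ z - ϱ) * (moeb γ z - conj ϱ) / (ϱ - conj ϱ)) ^ (-(k : ℤ)) *
    ((γ.1 1 0 : ℂ) * z + (γ.1 1 1 : ℂ)) ^ (-(2 * k : ℤ))

/-- The Petersson Poincaré series `η_{k,ϱ}(z)`. -/
def etaP (k : ℕ) (ϱ z : ℂ) : ℂ := (1 / 2 : ℂ) * ∑' γ : SL2Z, etaTerm k ϱ z γ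

/-!
Write `φ_τ(z) = (τ - τ̄) / ((z - τ) (z - τ̄))`, so that `η_{k,ϱ} = ½ ∑_g φ_{g⁻¹ϱ} ^ k`, and put
`n = k - 1`. In the Cayley coordinate `w = (z - τ) / (z - τ̄)` one has `φ_τ dz = dw / w`, and
`F = i Q_γ φ_τ` is a Laurent polynomial in `w` which is real on the unit circle. Hence the form
`Re (i ^ n φ_τ ^ (n + 1) Q_γ ^ n dz) = Re (F ^ n dw / w)` has no period around `w = 0`; it is the
differential of its integral `U_τ` along rays issuing from the unit circle.

This potential satisfies `U_{γτ}(γz) = U_τ(z)`, and it is `O((1 - |w|) ^ k)` as `|w| → 1`, so that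
`∑_g U_{g⁻¹ϱ}(z₀)` converges absolutely. The real part of the pairing is half of
`∑_g (U_{g⁻¹ϱ}(γz₀) - U_{g⁻¹ϱ}(z₀)) = ∑_g (U_{(gγ)⁻¹ϱ}(z₀) - U_{g⁻¹ϱ}(z₀))`, which vanishes on
replacing `g` by `gγ⁻¹` in the first half.
-/

open scoped UpperHalfPlane

section RadialPotential

/-- The real-linear form `v ↦ Re (a v)`: a real function `V` satisfies `dV = Re (f dz)` at `z`
when its derivative there is `reMulCLM (f z)`. -/
def reMulCLM (a : ℂ) : ℂ →L[ℝ] ℝ := reCLM ∘L ContinuousLinearMap.mul ℝ ℂ a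

lemma reMulCLM_apply (a v : ℂ) : reMulCLM a v = (a * v).re := rfl

lemma hasFDerivAt_re_of_hasDerivAt {G : ℂ → ℂ} {G' z : ℂ} (hG : HasDerivAt G G' z) :
    HasFDerivAt (fun z => (G z).re) (reMulCLM G') z := by
  refine (reCLM.hasFDerivAt.comp z (hG.hasFDerivAt.restrictScalars ℝ)).congr_fderiv ?_
  ext; simp [reMulCLM_apply, mul_comm]

lemma hasFDerivAt_reMulCLM_comp {V : ℂ → ℝ} {a c' z : ℂ} {c : ℂ → ℂ}
    (hV : HasFDerivAt V (reMulCLM a) (c z)) (hc : HasDerivAt c c' z) :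
    HasFDerivAt (fun z => V (c z)) (reMulCLM (a * c')) z := by
  refine (hV.comp z (hc.hasFDerivAt.restrictScalars ℝ)).congr_fderiv ?_
  ext; simp [reMulCLM_apply, mul_comm, mul_left_comm]

/-- The integral of `Re (f dw / w)` along the ray from the unit circle to `w`, written in the
logarithmic coordinate `t = log ‖·‖`. -/
def radialPotential (f : ℂ → ℂ) (w : ℂ) : ℝ :=
  ∫ t in (0 : ℝ)..Real.log ‖w‖, (f (Real.exp t * (w / ‖w‖))).re

lemma radialPotential_comp_mul_left (f : ℂ → ℂ) {u : ℂ} (hu : ‖u‖ = 1) (w : ℂ) :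
    radialPotential (fun v => f (u * v)) w = radialPotential f (u * w) := by
  simp only [radialPotential, norm_mul, hu, one_mul, mul_div_assoc, mul_left_comm u]

lemma norm_ofReal_mul_div_norm {w : ℂ} (hw : w ≠ 0) {s : ℝ} (hs : 0 ≤ s) :
    ‖(s : ℂ) * (w / ‖w‖)‖ = s := by
  rw [norm_mul, norm_div, norm_real, norm_real, norm_norm, div_self (norm_ne_zero_iff.2 hw),
    mul_one, Real.norm_of_nonneg hs]

lemma ofReal_mul_div_norm_sub {w : ℂ} (hw : w ≠ 0) (s : ℝ) :
    (s : ℂ) * (w / ‖w‖) - w = (s - ‖w‖ : ℝ) * (w / ‖w‖) := by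
  have hnorm : (‖w‖ : ℂ) ≠ 0 := ofReal_ne_zero.2 (norm_ne_zero_iff.2 hw)
  push_cast
  field_simp

lemma abs_radialPotential_le {f : ℂ → ℂ} {w : ℂ} (hw : w ≠ 0) (hw1 : ‖w‖ ≤ 1) {M : ℝ}
    (hM : ∀ s ∈ Icc ‖w‖ 1, ‖f (s * (w / ‖w‖))‖ ≤ M) :
    |radialPotential f w| ≤ M * |Real.log ‖w‖| := by
  have hlog : Real.log ‖w‖ ≤ 0 := Real.log_nonpos (norm_nonneg w) hw1
  have bound : ∀ t ∈ uIoc 0 (Real.log ‖w‖), ‖(f (Real.exp t * (w / ‖w‖))).re‖ ≤ M := by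
    intro t ht
    rw [uIoc_of_ge hlog] at ht
    exact (abs_re_le_norm _).trans <| hM _
      ⟨(Real.log_le_iff_le_exp (norm_pos_iff.2 hw)).1 ht.1.le, Real.exp_le_one_iff.2 ht.2⟩
  simpa only [radialPotential, sub_zero, Real.norm_eq_abs] using
    intervalIntegral.norm_integral_le_of_norm_le_const bound

variable {f G : ℂ → ℂ}

lemma re_primitive_exp_mul_I (hreal : ∀ w, ‖w‖ = 1 → (f w).im = 0)
    (hG : ∀ ζ, HasDerivAt G (f (cexp ζ)) ζ) (y : ℝ) : (G (y * I)).re = (G 0).re := by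
  have hderiv (x : ℝ) : HasDerivAt (fun x : ℝ => (G (x * I)).re) 0 x := by
    have hline : HasDerivAt (fun x : ℝ => (x : ℂ) * I) (1 * I) x :=
      ofRealCLM.hasDerivAt.mul_const I
    refine ((hasFDerivAt_re_of_hasDerivAt (hG (x * I))).comp_hasDerivAt x hline).congr_deriv ?_
    simp [reMulCLM_apply, hreal _ (norm_exp_ofReal_mul_I x)]
  simpa using is_const_of_deriv_eq_zero (fun x => (hderiv x).differentiableAt)
    (fun x => (hderiv x).deriv) y 0

lemma radialPotential_exp (hf : DifferentiableOn ℂ f {0}ᶜ)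
    (hreal : ∀ w, ‖w‖ = 1 → (f w).im = 0)
    (hG : ∀ ζ, HasDerivAt G (f (cexp ζ)) ζ) (ζ : ℂ) :
    radialPotential f (cexp ζ) = (G ζ).re - (G 0).re := by
  have hexp (t : ℝ) : cexp (t + ζ.im * I) = Real.exp t * (cexp ζ / ‖cexp ζ‖) := by
    rw [norm_exp, Complex.exp_add, ofReal_exp, ofReal_exp, ← Complex.exp_sub,
      ← eq_sub_of_add_eq' (re_add_im ζ)]
  have hderiv (t : ℝ) : HasDerivAt (fun t : ℝ => (G (t + ζ.im * I)).re)
      (f (Real.exp t * (cexp ζ / ‖cexp ζ‖))).re t := by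
    have hline : HasDerivAt (fun t : ℝ => (t : ℂ) + ζ.im * I) 1 t :=
      ofRealCLM.hasDerivAt.add_const _
    refine ((hasFDerivAt_re_of_hasDerivAt (hG _)).comp_hasDerivAt t hline).congr_deriv ?_
    rw [reMulCLM_apply, mul_one, hexp]
  have hcont : Continuous fun t : ℝ => (f (Real.exp t * (cexp ζ / ‖cexp ζ‖))).re := by
    simp only [← hexp]
    exact continuous_re.comp (hf.continuousOn.comp_continuous (by fun_prop)
      fun t => Complex.exp_ne_zero _)
  rw [radialPotential, norm_exp, Real.log_exp, ← norm_exp,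
    intervalIntegral.integral_eq_sub_of_hasDerivAt (fun t _ => hderiv t)
      (hcont.intervalIntegrable _ _), re_add_im, ofReal_zero, zero_add,
    re_primitive_exp_mul_I hreal hG]

/-- A local logarithm turns the potential into `Re G` for a primitive `G` of `f ∘ exp`. As `f` is
real on the unit circle, `Re G` is constant on the imaginary axis, so `Re (f dw / w)` has no period
around the origin. -/
lemma hasFDerivAt_radialPotential (hf : DifferentiableOn ℂ f {0}ᶜ)
    (hreal : ∀ w, ‖w‖ = 1 → (f w).im = 0) {w : ℂ} (hw : w ≠ 0) :
    HasFDerivAt (radialPotential f) (reMulCLM (f w / w)) w := by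
  have hfexp : Differentiable ℂ fun ζ => f (cexp ζ) := fun ζ =>
    (hf.differentiableAt (isOpen_compl_singleton.mem_nhds (Complex.exp_ne_zero ζ))).comp ζ
      differentiableAt_exp
  obtain ⟨G, hG⟩ : ∃ G, ∀ ζ, HasDerivAt G (f (cexp ζ)) ζ := by
    obtain ⟨G, hG⟩ := hfexp.isExactOn_univ
    exact ⟨G, fun ζ => hG ζ (mem_univ ζ)⟩
  have hlog : HasDerivAt (fun v => log w + log (v / w)) (w⁻¹) w := by
    have hdiv : HasDerivAt (fun v => v / w) (1 / w) w := (hasDerivAt_id w).div_const w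
    refine ((hdiv.clog ?_).const_add (log w)).congr_deriv ?_
    · simp [div_self hw]
    · field_simp
  have hGlog := (hG _).comp w hlog
  rw [div_self hw, log_one, add_zero, exp_log hw, ← div_eq_mul_inv] at hGlog
  refine ((hasFDerivAt_re_of_hasDerivAt hGlog).sub_const (G 0).re).congr_of_eventuallyEq ?_
  filter_upwards [isOpen_compl_singleton.mem_nhds hw] with v hv
  have hexp : cexp (log w + log (v / w)) = v := by
    rw [Complex.exp_add, exp_log hw, exp_log (div_ne_zero hv hw), mul_div_cancel₀ v hw]
  conv_lhs => rw [← hexp]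
  exact radialPotential_exp hf hreal hG _

end RadialPotential

section PathIntegrals

variable {σ : ℝ → ℂ}

lemma pathInt_const_mul (c : ℂ) (f : ℂ → ℂ) (σ : ℝ → ℂ) :
    pathInt (fun z => c * f z) σ = c * pathInt f σ := by
  simp only [pathInt, mul_assoc, intervalIntegral.integral_const_mul]

lemma pathInt_congr {f g : ℂ → ℂ} (h : EqOn f g (σ '' Icc 0 1)) : pathInt f σ = pathInt g σ := by
  refine intervalIntegral.integral_congr fun t ht => ?_
  rw [uIcc_of_le zero_le_one] at ht
  exact congrArg (· * deriv σ t) (h (mem_image_of_mem σ ht))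

lemma PiecewiseC1.exists_countable_differentiableAt (hσ : PiecewiseC1 σ) :
    ∃ S : Set ℝ, S.Countable ∧ ∀ x ∈ Ioo (0 : ℝ) 1 \ S, DifferentiableAt ℝ σ x := by
  obtain ⟨-, n, t, -, ht0, htn, -, hd⟩ := hσ
  refine ⟨range t, countable_range t, fun x ⟨hx, hxt⟩ => ?_⟩
  obtain ⟨i, hi, hix, hxi⟩ : ∃ i < n, t i < x ∧ x < t (i + 1) := by
    by_contra! hgap
    have ht_lt : ∀ i ≤ n, t i < x := by
      intro i hi
      induction i with
      | zero => exact ht0 ▸ hx.1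
      | succ i ih => exact (hgap i hi (ih (by lia))).lt_of_ne fun h => hxt ⟨i + 1, h⟩
    exact (ht_lt n le_rfl).not_gt (htn ▸ hx.2)
  exact ((hd i hi).differentiableOn one_ne_zero).differentiableAt (Icc_mem_nhds hix hxi)

lemma PiecewiseC1.intervalIntegrable_deriv (hσ : PiecewiseC1 σ) :
    IntervalIntegrable (deriv σ) volume 0 1 := by
  obtain ⟨-, n, t, -, ht0, htn, hmono, hd⟩ := hσ
  rw [← ht0, ← htn]
  refine IntervalIntegrable.trans_iterate fun i hi => ?_
  rcases (hmono i hi).eq_or_lt with heq | hlt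
  · rw [heq]
  · have hint : IntervalIntegrable (derivWithin σ (Icc (t i) (t (i + 1)))) volume
        (t i) (t (i + 1)) :=
      ((hd i hi).continuousOn_derivWithin (uniqueDiffOn_Icc hlt) le_rfl).intervalIntegrable_of_Icc
        hlt.le
    rw [intervalIntegrable_iff_integrableOn_Ioo_of_le hlt.le] at hint ⊢
    exact hint.congr_fun (fun x hx => derivWithin_of_mem_nhds (Icc_mem_nhds hx.1 hx.2))
      measurableSet_Ioo

lemma PiecewiseC1.intervalIntegrable_mul_deriv (hσ : PiecewiseC1 σ) {f : ℂ → ℂ}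
    (hf : ContinuousOn f (σ '' Icc 0 1)) :
    IntervalIntegrable (fun t => f (σ t) * deriv σ t) volume 0 1 := by
  refine hσ.intervalIntegrable_deriv.continuousOn_mul ?_
  rw [uIcc_of_le zero_le_one]
  exact hf.comp hσ.1 (mapsTo_image σ _)

lemma re_pathInt_eq_sub (hσ : PiecewiseC1 σ) {f : ℂ → ℂ} {V : ℂ → ℝ}
    (hf : ContinuousOn f (σ '' Icc 0 1))
    (hV : ∀ z ∈ σ '' Icc 0 1, HasFDerivAt V (reMulCLM (f z)) z) :
    (pathInt f σ).re = V (σ 1) - V (σ 0) := by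
  obtain ⟨S, hS, hdiff⟩ := hσ.exists_countable_differentiableAt
  have hint := hσ.intervalIntegrable_mul_deriv hf
  have hre : (pathInt f σ).re = ∫ t in (0 : ℝ)..1, (f (σ t) * deriv σ t).re :=
    (reCLM.intervalIntegral_comp_comm hint).symm
  rw [hre]
  refine integral_eq_of_hasDerivAt_off_countable (fun t => V (σ t)) _ hS ?_ ?_
    ⟨hint.1.re, hint.2.re⟩
  · rw [uIcc_of_le zero_le_one]
    exact ContinuousOn.comp (t := σ '' Icc 0 1)
      (fun z hz => (hV z hz).continuousAt.continuousWithinAt) hσ.1 (mapsTo_image σ _)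
  · rw [min_eq_left zero_le_one, max_eq_right zero_le_one]
    exact fun t ht => (hV _ (mem_image_of_mem σ (Ioo_subset_Icc_self ht.1))).comp_hasDerivAt t
      (hdiff t ht).hasDerivAt

lemma exists_summable_bound_of_eventually {ι X E : Type*} [TopologicalSpace X]
    [SeminormedAddCommGroup E] {K : Set X} (hK : IsCompact K) {f : ι → X → E}
    (hf : ∀ i, ContinuousOn (f i) K) {u : ι → ℝ} (hu : Summable u)
    (hfu : ∀ᶠ i in Filter.cofinite, ∀ x ∈ K, ‖f i x‖ ≤ u i) :
    ∃ v : ι → ℝ, Summable v ∧ ∀ i, ∀ x ∈ K, ‖f i x‖ ≤ v i := by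
  classical
  choose C hC using fun i => hK.exists_bound_of_continuousOn (hf i)
  refine ⟨fun i => if ∀ x ∈ K, ‖f i x‖ ≤ u i then u i else C i, ?_, fun i x hx => ?_⟩
  · refine (summable_congr_cofinite ?_).2 hu
    filter_upwards [hfu] with i hi using if_pos hi
  · dsimp only
    split_ifs with hi
    · exact hi x hx
    · exact hC i x hx

lemma hasSum_pathInt {ι : Type*} [Countable ι] (hσ : PiecewiseC1 σ) {f : ι → ℂ → ℂ}
    (hf : ∀ i, ContinuousOn (f i) (σ '' Icc 0 1)) {u : ι → ℝ} (hu : Summable u)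
    (hfu : ∀ᶠ i in Filter.cofinite, ∀ z ∈ σ '' Icc 0 1, ‖f i z‖ ≤ u i) :
    HasSum (fun i => pathInt (f i) σ) (pathInt (fun z => ∑' i, f i z) σ) := by
  obtain ⟨v, hv, hfv⟩ :=
    exists_summable_bound_of_eventually (isCompact_Icc.image_of_continuousOn hσ.1) hf hu hfu
  have hmem {t : ℝ} (ht : t ∈ uIoc (0 : ℝ) 1) : σ t ∈ σ '' Icc 0 1 :=
    mem_image_of_mem σ (Ioc_subset_Icc_self (uIoc_of_le (zero_le_one' ℝ) ▸ ht))
  refine intervalIntegral.hasSum_integral_of_dominated_convergence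
    (fun i t => v i * ‖deriv σ t‖)
    (fun i => (hσ.intervalIntegrable_mul_deriv (hf i)).def'.aestronglyMeasurable)
    (fun i => .of_forall fun t ht => ?_) (.of_forall fun t _ => hv.mul_right _) ?_
    (.of_forall fun t ht => ?_)
  · rw [norm_mul]
    gcongr
    exact hfv i _ (hmem ht)
  · simp only [tsum_mul_right]
    exact hσ.intervalIntegrable_deriv.norm.const_mul _
  · exact (Summable.of_norm_bounded hv fun i => hfv i _ (hmem ht)).hasSum.mul_right _

end PathIntegrals

section Moebius

/-- The automorphy factor `cz + d` of `γ = (a b; c d)`. -/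
def autFactor (γ : SL2Z) (z : ℂ) : ℂ := (γ.1 1 0 : ℂ) * z + (γ.1 1 1 : ℂ)

variable (γ : SL2Z)

lemma intCast_det_eq_one :
    (γ.1 0 0 : ℂ) * (γ.1 1 1 : ℂ) - (γ.1 0 1 : ℂ) * (γ.1 1 0 : ℂ) = 1 := by
  exact_mod_cast (Matrix.det_fin_two γ.1).symm.trans γ.2

lemma autFactor_ne_zero {z : ℂ} (hz : z.im ≠ 0) : autFactor γ z ≠ 0 := by
  intro h
  have hc : γ.1 1 0 = 0 := by simpa [autFactor, hz] using congrArg im h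
  have hd : γ.1 1 1 = 0 := by simpa [autFactor, hc] using congrArg re h
  simpa [hc, hd] using intCast_det_eq_one γ

lemma autFactor_coe_ne_zero (τ : ℍ) : autFactor γ τ ≠ 0 := autFactor_ne_zero γ τ.im_pos.ne'

lemma autFactor_conj_ne_zero (τ : ℍ) : autFactor γ (conj (τ : ℂ)) ≠ 0 :=
  autFactor_ne_zero γ (by simpa using τ.im_pos.ne')

lemma conj_autFactor (z : ℂ) : conj (autFactor γ z) = autFactor γ (conj z) := by simp [autFactor]

lemma coe_smul_eq_moeb (z : ℍ) : ((γ • z : ℍ) : ℂ) = moeb γ z := by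
  rw [UpperHalfPlane.coe_specialLinearGroup_apply]
  simp [moeb]

lemma conj_moeb (z : ℂ) : conj (moeb γ z) = moeb γ (conj z) := by simp [moeb]

lemma moeb_sub_moeb {z w : ℂ} (hz : autFactor γ z ≠ 0) (hw : autFactor γ w ≠ 0) :
    moeb γ z - moeb γ w = (z - w) / (autFactor γ z * autFactor γ w) := by
  unfold autFactor at hz hw
  rw [moeb, moeb, autFactor, autFactor, div_sub_div _ _ hz hw]
  congr 1
  linear_combination (z - w) * intCast_det_eq_one γ

end Moebius

section PeterssonKernel

/-- The binary quadratic form `c x² + (d − a) x y − b y²` attached to `γ = (a b; c d)`, whose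
dehomogenization is `Qpoly`. -/
def quadForm (γ : SL2Z) (x y : ℂ) : ℂ :=
  (γ.1 1 0 : ℂ) * x ^ 2 + ((γ.1 1 1 : ℂ) - (γ.1 0 0 : ℂ)) * (x * y) - (γ.1 0 1 : ℂ) * y ^ 2

/-- The meromorphic function `(τ - τ̄) / ((z - τ) (z - τ̄))` whose `k`-th power is averaged over
`SL₂(ℤ)` in the Petersson Poincaré series. -/
def peterssonKernel (τ : ℍ) (z : ℂ) : ℂ := (τ - conj (τ : ℂ)) / ((z - τ) * (z - conj (τ : ℂ)))

/-- The Cayley transform `z ↦ (z - τ) / (z - τ̄)` from the upper half-plane to the unit disc. -/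
def cayley (τ : ℍ) (z : ℂ) : ℂ := (z - τ) / (z - conj (τ : ℂ))

/-- The function `i Q_γ(z, 1) (τ - τ̄) / ((z - τ) (z - τ̄))` written in the coordinate
`w = cayley τ z`. -/
def cayleyForm (γ : SL2Z) (τ : ℍ) (w : ℂ) : ℂ :=
  I * quadForm γ (τ - w * conj (τ : ℂ)) (1 - w) / ((τ - conj (τ : ℂ)) * w)

variable (γ : SL2Z) (τ : ℍ)

lemma quadForm_one_right (z : ℂ) : quadForm γ z 1 = Qpoly γ z := by simp [quadForm, Qpoly]

lemma quadForm_mul_mul (s x y : ℂ) : quadForm γ (s * x) (s * y) = s ^ 2 * quadForm γ x y := by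
  unfold quadForm; ring

lemma conj_quadForm (x y : ℂ) : conj (quadForm γ x y) = quadForm γ (conj x) (conj y) := by
  simp [quadForm]

lemma quadForm_mulVec (x y : ℂ) :
    quadForm γ ((γ.1 0 0 : ℂ) * x + (γ.1 0 1 : ℂ) * y) ((γ.1 1 0 : ℂ) * x + (γ.1 1 1 : ℂ) * y) =
      quadForm γ x y := by
  unfold quadForm
  linear_combination ((γ.1 1 0 : ℂ) * x ^ 2 + ((γ.1 1 1 : ℂ) - (γ.1 0 0 : ℂ)) * (x * y) -
    (γ.1 0 1 : ℂ) * y ^ 2) * intCast_det_eq_one γ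

lemma coe_sub_conj_self_ne_zero : (τ : ℂ) - conj (τ : ℂ) ≠ 0 := by
  simpa [sub_conj] using τ.im_pos.ne'

lemma coe_sub_conj_ne_zero (z : ℍ) : (z : ℂ) - conj (τ : ℂ) ≠ 0 := fun h => by
  have him : z.im + τ.im = 0 := by simpa using congrArg im h
  linarith [z.im_pos, τ.im_pos]

variable {τ} in
lemma cayley_ne_zero {z : ℍ} (hz : (z : ℂ) ≠ τ) : cayley τ z ≠ 0 :=
  div_ne_zero (sub_ne_zero.2 hz) (coe_sub_conj_ne_zero τ z)

variable {τ} in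
lemma hasDerivAt_cayley {z : ℍ} (hz : (z : ℂ) ≠ τ) :
    HasDerivAt (cayley τ) (cayley τ z * peterssonKernel τ z) z := by
  have hconj := coe_sub_conj_ne_zero τ z
  have hsub := sub_ne_zero.2 hz
  refine (((hasDerivAt_id (z : ℂ)).sub_const (τ : ℂ)).div
    ((hasDerivAt_id (z : ℂ)).sub_const (conj (τ : ℂ))) hconj).congr_deriv ?_
  simp only [id, cayley, peterssonKernel]
  field_simp
  ring

variable {τ} in
lemma continuousOn_peterssonKernel {s : Set ℂ} (hs : s ⊆ UH) (hτ : (τ : ℂ) ∉ s) :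
    ContinuousOn (peterssonKernel τ) s := by
  unfold peterssonKernel
  refine continuousOn_const.div (by fun_prop) fun z hz => mul_ne_zero ?_ ?_
  · exact sub_ne_zero.2 (ne_of_mem_of_not_mem hz hτ)
  · exact coe_sub_conj_ne_zero τ ⟨z, hs hz⟩

lemma one_sub_cayley (z : ℍ) : 1 - cayley τ z = (τ - conj (τ : ℂ)) / (z - conj (τ : ℂ)) := by
  have hconj := coe_sub_conj_ne_zero τ z
  unfold cayley
  field_simp
  ring

lemma coe_sub_cayley_mul_conj (z : ℍ) :
    (τ : ℂ) - cayley τ z * conj (τ : ℂ) = (1 - cayley τ z) * z := by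
  have hconj := coe_sub_conj_ne_zero τ z
  unfold cayley
  field_simp
  ring

lemma cayleyForm_cayley (z : ℍ) :
    cayleyForm γ τ (cayley τ z) = I * (Qpoly γ z * peterssonKernel τ z) := by
  have hτ := coe_sub_conj_self_ne_zero τ
  rw [cayleyForm, coe_sub_cayley_mul_conj]
  nth_rw 2 [← mul_one (1 - cayley τ z)]
  rw [quadForm_mul_mul, quadForm_one_right, one_sub_cayley, cayley, peterssonKernel]
  field_simp

lemma differentiableOn_cayleyForm : DifferentiableOn ℂ (cayleyForm γ τ) {0}ᶜ := by
  unfold cayleyForm quadForm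
  exact DifferentiableOn.div (by fun_prop) (by fun_prop)
    fun w hw => mul_ne_zero (coe_sub_conj_self_ne_zero τ) hw

lemma im_cayleyForm_eq_zero_of_norm_eq_one {w : ℂ} (hw : ‖w‖ = 1) : (cayleyForm γ τ w).im = 0 := by
  have hww : w * conj w = 1 := by simp [mul_conj, normSq_eq_norm_sq, hw]
  have hw0 : w ≠ 0 := left_ne_zero_of_mul_eq_one hww
  have hτ := coe_sub_conj_self_ne_zero τ
  have hx : conj ((τ : ℂ) - w * conj (τ : ℂ)) = -conj w * (τ - w * conj (τ : ℂ)) := by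
    simp only [map_sub, map_mul, conj_conj]
    linear_combination -conj (τ : ℂ) * hww
  have hy : conj (1 - w) = -conj w * (1 - w) := by
    simp only [map_sub, map_one]
    linear_combination -hww
  have hden : conj ((τ - conj (τ : ℂ)) * w) = -((τ - conj (τ : ℂ)) * conj w) := by
    simp only [map_sub, map_mul, conj_conj]
    ring
  rw [← conj_eq_iff_im, cayleyForm, map_div₀, map_mul, conj_quadForm, hx, hy, hden,
    quadForm_mul_mul, conj_I, eq_inv_of_mul_eq_one_right hww]
  field_simp

lemma peterssonKernel_smul (z : ℍ) :
    peterssonKernel (γ • τ) (moeb γ z) = autFactor γ z ^ 2 * peterssonKernel τ z := by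
  have hz := autFactor_coe_ne_zero γ z
  have hτ := autFactor_coe_ne_zero γ τ
  have hτ' := autFactor_conj_ne_zero γ τ
  rw [peterssonKernel, peterssonKernel, coe_smul_eq_moeb, conj_moeb, moeb_sub_moeb γ hτ hτ',
    moeb_sub_moeb γ hz hτ, moeb_sub_moeb γ hz hτ']
  field_simp

lemma cayley_smul (z : ℍ) :
    cayley (γ • τ) (moeb γ z) = autFactor γ (conj (τ : ℂ)) / autFactor γ τ * cayley τ z := by
  have hz := autFactor_coe_ne_zero γ z
  have hτ := autFactor_coe_ne_zero γ τ
  have hτ' := autFactor_conj_ne_zero γ τ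
  rw [cayley, cayley, coe_smul_eq_moeb, conj_moeb, moeb_sub_moeb γ hz hτ, moeb_sub_moeb γ hz hτ']
  field_simp

lemma norm_autFactor_conj_div : ‖autFactor γ (conj (τ : ℂ)) / autFactor γ τ‖ = 1 := by
  rw [norm_div, ← conj_autFactor, norm_conj, div_self (norm_ne_zero_iff.2
    (autFactor_coe_ne_zero γ τ))]

lemma cayleyForm_smul (w : ℂ) :
    cayleyForm γ (γ • τ) (autFactor γ (conj (τ : ℂ)) / autFactor γ τ * w) = cayleyForm γ τ w := by
  have hτ := autFactor_coe_ne_zero γ τ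
  have hτ' := autFactor_conj_ne_zero γ τ
  have hx : moeb γ τ - autFactor γ (conj (τ : ℂ)) / autFactor γ τ * w * moeb γ (conj (τ : ℂ)) =
      (autFactor γ τ)⁻¹ *
        ((γ.1 0 0 : ℂ) * (τ - w * conj (τ : ℂ)) + (γ.1 0 1 : ℂ) * (1 - w)) := by
    rw [moeb, moeb, ← autFactor, ← autFactor]
    field_simp
    ring
  have hy : 1 - autFactor γ (conj (τ : ℂ)) / autFactor γ τ * w =
      (autFactor γ τ)⁻¹ *
        ((γ.1 1 0 : ℂ) * (τ - w * conj (τ : ℂ)) + (γ.1 1 1 : ℂ) * (1 - w)) := by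
    field_simp
    rw [autFactor, autFactor]
    ring
  rw [cayleyForm, cayleyForm, coe_smul_eq_moeb, conj_moeb, hx, hy, quadForm_mul_mul,
    quadForm_mulVec, moeb_sub_moeb γ hτ hτ']
  field_simp

lemma etaTerm_eq_peterssonKernel_pow (k : ℕ) (ϱ z : ℍ) (g : SL2Z) :
    etaTerm k ϱ z g = peterssonKernel (g⁻¹ • ϱ) z ^ k := by
  obtain ⟨τ, rfl⟩ : ∃ τ, g • τ = ϱ := ⟨g⁻¹ • ϱ, smul_inv_smul g ϱ⟩
  have hz := autFactor_coe_ne_zero g z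
  have hkernel := peterssonKernel_smul g τ z
  rw [inv_smul_smul, etaTerm, ← autFactor, ← inv_div, ← peterssonKernel, hkernel, inv_zpow',
    neg_neg, mul_zpow, zpow_neg, zpow_mul, zpow_natCast]
  norm_cast
  field_simp

end PeterssonKernel

section GeodesicPotential

/-- A real function of `z` with differential `Re (i ^ n φ_τ(z) ^ (n + 1) Q_γ(z, 1) ^ n dz)`, where
`φ_τ` is `peterssonKernel τ`. -/
def geodesicPotential (n : ℕ) (γ : SL2Z) (τ : ℍ) (z : ℂ) : ℝ :=
  radialPotential (fun w => cayleyForm γ τ w ^ n) (cayley τ z)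

variable (n : ℕ) (γ : SL2Z) (τ z : ℍ)

variable {τ z} in
lemma hasFDerivAt_geodesicPotential (hz : (z : ℂ) ≠ τ) :
    HasFDerivAt (geodesicPotential n γ τ)
      (reMulCLM (I ^ n * (peterssonKernel τ z ^ (n + 1) * Qpoly γ z ^ n))) z := by
  have hw := cayley_ne_zero hz
  have hreal (w : ℂ) (hw1 : ‖w‖ = 1) : (cayleyForm γ τ w ^ n).im = 0 := by
    rw [← conj_eq_iff_im, map_pow, conj_eq_iff_im.2 (im_cayleyForm_eq_zero_of_norm_eq_one γ τ hw1)]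
  have hderiv := hasFDerivAt_reMulCLM_comp
    (hasFDerivAt_radialPotential ((differentiableOn_cayleyForm γ τ).pow n) hreal hw)
    (hasDerivAt_cayley hz)
  refine hderiv.congr_fderiv (congrArg reMulCLM ?_)
  simp only [Pi.pow_apply, cayleyForm_cayley]
  field_simp
  ring

lemma geodesicPotential_smul :
    geodesicPotential n γ (γ • τ) (moeb γ z) = geodesicPotential n γ τ z := by
  simp only [geodesicPotential]
  rw [cayley_smul, ← radialPotential_comp_mul_left _ (norm_autFactor_conj_div γ τ)]
  simp only [cayleyForm_smul]

end GeodesicPotential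

section Decay

/-- The quantity `Im τ / |z - τ̄|²`, which measures how close `cayley τ z` is to the unit circle and
controls both `peterssonKernel` and `geodesicPotential`. -/
def cayleyDefect (τ : ℍ) (z : ℂ) : ℝ := τ.im / ‖z - conj (τ : ℂ)‖ ^ 2

variable (γ : SL2Z) (τ z : ℍ)

lemma cayleyDefect_nonneg (z : ℂ) : 0 ≤ cayleyDefect τ z := by
  unfold cayleyDefect
  positivity

lemma norm_coe_sub_conj_pos : 0 < ‖(z : ℂ) - conj (τ : ℂ)‖ :=
  norm_pos_iff.2 (coe_sub_conj_ne_zero τ z)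

lemma norm_coe_sub_conj_self : ‖(τ : ℂ) - conj (τ : ℂ)‖ = 2 * τ.im := by
  rw [sub_conj, UpperHalfPlane.coe_im, norm_mul, norm_I, mul_one, norm_real,
    Real.norm_of_nonneg (by positivity)]

lemma im_le_norm_coe_sub_conj : z.im ≤ ‖(z : ℂ) - conj (τ : ℂ)‖ :=
  calc z.im ≤ z.im + τ.im := by linarith [τ.im_pos]
    _ = ((z : ℂ) - conj (τ : ℂ)).im := by simp
    _ ≤ ‖(z : ℂ) - conj (τ : ℂ)‖ := im_le_norm _

lemma one_sub_norm_cayley_sq : 1 - ‖cayley τ z‖ ^ 2 = 4 * z.im * cayleyDefect τ z := by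
  have hpos := norm_coe_sub_conj_pos τ z
  rw [cayley, cayleyDefect, norm_div, div_pow]
  field_simp
  simp only [← normSq_eq_norm_sq, normSq_apply, sub_re, sub_im, conj_re, conj_im,
    UpperHalfPlane.coe_re, UpperHalfPlane.coe_im]
  ring

lemma norm_cayley_le_one : ‖cayley τ z‖ ≤ 1 := by
  have hdefect := cayleyDefect_nonneg τ z
  refine (sq_le_one_iff₀ (norm_nonneg _)).1 (sub_nonneg.1 ?_)
  rw [one_sub_norm_cayley_sq]
  positivity

lemma one_sub_norm_cayley_le : 1 - ‖cayley τ z‖ ≤ 4 * z.im * cayleyDefect τ z := by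
  rw [← one_sub_norm_cayley_sq]
  nlinarith [norm_cayley_le_one τ z, norm_nonneg (cayley τ z)]

lemma abs_log_norm_cayley_le (hw : 1 / 2 ≤ ‖cayley τ z‖) :
    |Real.log ‖cayley τ z‖| ≤ 8 * z.im * cayleyDefect τ z := by
  have hpos : 0 < ‖cayley τ z‖ := by linarith
  calc |Real.log ‖cayley τ z‖| = -Real.log ‖cayley τ z‖ :=
        abs_of_nonpos (Real.log_nonpos hpos.le (norm_cayley_le_one τ z))
    _ ≤ ‖cayley τ z‖⁻¹ - 1 := by linarith [Real.one_sub_inv_le_log_of_pos hpos]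
    _ = (1 - ‖cayley τ z‖) / ‖cayley τ z‖ := by field_simp
    _ ≤ (1 - ‖cayley τ z‖) / (1 / 2) := by
        gcongr
        exact sub_nonneg.2 (norm_cayley_le_one τ z)
    _ ≤ 8 * z.im * cayleyDefect τ z := by linarith [one_sub_norm_cayley_le τ z]

lemma norm_peterssonKernel_le (hw : 1 / 2 ≤ ‖cayley τ z‖) :
    ‖peterssonKernel τ z‖ ≤ 4 * cayleyDefect τ z := by
  have hpos := norm_coe_sub_conj_pos τ z
  have hnorm : ‖peterssonKernel τ z‖ = 2 * cayleyDefect τ z / ‖cayley τ z‖ := by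
    rw [peterssonKernel, cayley, cayleyDefect, norm_div, norm_div, norm_mul,
      norm_coe_sub_conj_self]
    field_simp
  have hdefect := cayleyDefect_nonneg τ z
  calc ‖peterssonKernel τ z‖ = 2 * cayleyDefect τ z / ‖cayley τ z‖ := hnorm
    _ ≤ 2 * cayleyDefect τ z / (1 / 2) := by gcongr
    _ = 4 * cayleyDefect τ z := by ring

lemma exists_norm_quadForm_le :
    ∃ A, 0 ≤ A ∧ ∀ {x y : ℂ} {M : ℝ}, ‖x‖ ≤ M → ‖y‖ ≤ M → ‖quadForm γ x y‖ ≤ A * M ^ 2 := by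
  refine ⟨‖(γ.1 1 0 : ℂ)‖ + ‖(γ.1 1 1 : ℂ) - (γ.1 0 0 : ℂ)‖ + ‖(γ.1 0 1 : ℂ)‖, by positivity,
    fun {x y M} hx hy => ?_⟩
  have hM : 0 ≤ M := (norm_nonneg x).trans hx
  calc ‖quadForm γ x y‖
      ≤ ‖(γ.1 1 0 : ℂ)‖ * ‖x‖ ^ 2 + ‖(γ.1 1 1 : ℂ) - (γ.1 0 0 : ℂ)‖ * (‖x‖ * ‖y‖) +
          ‖(γ.1 0 1 : ℂ)‖ * ‖y‖ ^ 2 := by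
        rw [← norm_pow, ← norm_pow, ← norm_mul x, ← norm_mul, ← norm_mul, ← norm_mul]
        exact (norm_sub_le _ _).trans (by gcongr; exact norm_add_le _ _)
    _ ≤ ‖(γ.1 1 0 : ℂ)‖ * M ^ 2 + ‖(γ.1 1 1 : ℂ) - (γ.1 0 0 : ℂ)‖ * (M * M) +
          ‖(γ.1 0 1 : ℂ)‖ * M ^ 2 := by gcongr
    _ = _ := by ring

lemma im_mul_cayleyDefect_le :
    z.im * cayleyDefect τ z ≤ τ.im / ‖(z : ℂ) - conj (τ : ℂ)‖ := by
  have hpos := norm_coe_sub_conj_pos τ z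
  rw [cayleyDefect, mul_div_assoc', div_le_div_iff₀ (by positivity) hpos]
  nlinarith [mul_le_mul_of_nonneg_left (im_le_norm_coe_sub_conj τ z) (mul_pos τ.im_pos hpos).le]

variable {τ z}

lemma norm_one_sub_le_of_norm_sub_cayley_le {v : ℂ}
    (hv : ‖v - cayley τ z‖ ≤ 4 * z.im * cayleyDefect τ z) :
    ‖1 - v‖ ≤ 6 * (τ.im / ‖(z : ℂ) - conj (τ : ℂ)‖) :=
  calc ‖1 - v‖ = ‖(1 - cayley τ z) - (v - cayley τ z)‖ := by ring_nf
    _ ≤ ‖1 - cayley τ z‖ + ‖v - cayley τ z‖ := norm_sub_le _ _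
    _ ≤ 2 * τ.im / ‖(z : ℂ) - conj (τ : ℂ)‖ + 4 * z.im * cayleyDefect τ z := by
        rw [one_sub_cayley, norm_div, norm_coe_sub_conj_self]
        gcongr
    _ ≤ 6 * (τ.im / ‖(z : ℂ) - conj (τ : ℂ)‖) := by
        rw [mul_div_assoc]
        linarith [im_mul_cayleyDefect_le τ z]

lemma norm_coe_sub_mul_conj_le_of_norm_sub_cayley_le {v : ℂ}
    (hv : ‖v - cayley τ z‖ ≤ 4 * z.im * cayleyDefect τ z) :
    ‖(τ : ℂ) - v * conj (τ : ℂ)‖ ≤ 10 * ‖(z : ℂ)‖ * (τ.im / ‖(z : ℂ) - conj (τ : ℂ)‖) := by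
  set D := ‖(z : ℂ) - conj (τ : ℂ)‖ with hD
  have hDpos : 0 < D := norm_coe_sub_conj_pos τ z
  have hτ : ‖conj (τ : ℂ)‖ ≤ ‖(z : ℂ)‖ + D := by
    simpa only [sub_sub_cancel] using norm_sub_le (z : ℂ) (z - conj (τ : ℂ))
  have him : z.im ≤ ‖(z : ℂ)‖ := im_le_norm z
  have hdefect : z.im * cayleyDefect τ z ≤ τ.im / D := im_mul_cayleyDefect_le τ z
  have hdefect0 := cayleyDefect_nonneg τ z
  calc ‖(τ : ℂ) - v * conj (τ : ℂ)‖
      = ‖(1 - cayley τ z) * z - (v - cayley τ z) * conj (τ : ℂ)‖ := by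
        rw [← coe_sub_cayley_mul_conj]
        ring_nf
    _ ≤ ‖1 - cayley τ z‖ * ‖(z : ℂ)‖ + ‖v - cayley τ z‖ * ‖conj (τ : ℂ)‖ := by
        rw [← norm_mul, ← norm_mul]
        exact norm_sub_le _ _
    _ ≤ 2 * τ.im / D * ‖(z : ℂ)‖ + 4 * z.im * cayleyDefect τ z * (‖(z : ℂ)‖ + D) := by
        rw [one_sub_cayley, norm_div, norm_coe_sub_conj_self]
        gcongr
    _ = 2 * (τ.im / D) * ‖(z : ℂ)‖ + 4 * (z.im * cayleyDefect τ z) * ‖(z : ℂ)‖ +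
          4 * (τ.im / D) * z.im := by
        rw [cayleyDefect, ← hD]
        field_simp
        ring
    _ ≤ 2 * (τ.im / D) * ‖(z : ℂ)‖ + 4 * (τ.im / D) * ‖(z : ℂ)‖ +
          4 * (τ.im / D) * ‖(z : ℂ)‖ := by gcongr
    _ = 10 * ‖(z : ℂ)‖ * (τ.im / D) := by ring

variable (z)

lemma exists_norm_cayleyForm_le :
    ∃ C, 0 ≤ C ∧ ∀ {τ : ℍ} {v : ℂ}, 1 / 2 ≤ ‖v‖ →
      ‖v - cayley τ z‖ ≤ 4 * z.im * cayleyDefect τ z →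
        ‖cayleyForm γ τ v‖ ≤ C * cayleyDefect τ z := by
  obtain ⟨A, hA, hquad⟩ := exists_norm_quadForm_le γ
  refine ⟨A * (10 * (‖(z : ℂ)‖ + 1)) ^ 2, by positivity, fun {τ v} hv hvw => ?_⟩
  set m := τ.im / ‖(z : ℂ) - conj (τ : ℂ)‖ with hm
  have hx : ‖(τ : ℂ) - v * conj (τ : ℂ)‖ ≤ 10 * (‖(z : ℂ)‖ + 1) * m :=
    (norm_coe_sub_mul_conj_le_of_norm_sub_cayley_le hvw).trans (by gcongr; linarith)
  have hy : ‖1 - v‖ ≤ 10 * (‖(z : ℂ)‖ + 1) * m :=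
    (norm_one_sub_le_of_norm_sub_cayley_le hvw).trans (by gcongr; linarith [norm_nonneg (z : ℂ)])
  have hden : τ.im ≤ ‖((τ : ℂ) - conj (τ : ℂ)) * v‖ := by
    rw [norm_mul, norm_coe_sub_conj_self]
    nlinarith [τ.im_pos]
  calc ‖cayleyForm γ τ v‖ ≤ A * (10 * (‖(z : ℂ)‖ + 1) * m) ^ 2 / τ.im := by
        rw [cayleyForm, norm_div, norm_mul, norm_I, one_mul]
        gcongr
        exact hquad hx hy
    _ = A * (10 * (‖(z : ℂ)‖ + 1)) ^ 2 * cayleyDefect τ z := by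
        rw [hm, cayleyDefect]
        have hpos := norm_coe_sub_conj_pos τ z
        field_simp

lemma exists_abs_geodesicPotential_le (n : ℕ) :
    ∃ C, ∀ τ : ℍ, 1 / 2 ≤ ‖cayley τ z‖ →
      |geodesicPotential n γ τ z| ≤ C * cayleyDefect τ z ^ (n + 1) := by
  obtain ⟨C, hC, hform⟩ := exists_norm_cayleyForm_le γ z
  refine ⟨C ^ n * (8 * z.im), fun τ hw => ?_⟩
  have hw0 : 0 < ‖cayley τ z‖ := by linarith
  have hw0' : cayley τ z ≠ 0 := norm_pos_iff.1 hw0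
  have hdefect := cayleyDefect_nonneg τ z
  have hpow : ∀ s ∈ Icc ‖cayley τ z‖ 1,
      ‖cayleyForm γ τ (s * (cayley τ z / ‖cayley τ z‖)) ^ n‖ ≤ (C * cayleyDefect τ z) ^ n := by
    intro s hs
    have hs0 : 0 ≤ s := hw0.le.trans hs.1
    rw [norm_pow]
    gcongr
    refine hform ?_ ?_
    · rw [norm_ofReal_mul_div_norm hw0' hs0]
      exact hw.trans hs.1
    · rw [ofReal_mul_div_norm_sub hw0' s, norm_ofReal_mul_div_norm hw0' (sub_nonneg.2 hs.1)]
      linarith [hs.2, one_sub_norm_cayley_le τ z]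
  calc |geodesicPotential n γ τ z|
      ≤ (C * cayleyDefect τ z) ^ n * |Real.log ‖cayley τ z‖| :=
        abs_radialPotential_le hw0' (norm_cayley_le_one τ z) hpow
    _ ≤ (C * cayleyDefect τ z) ^ n * (8 * z.im * cayleyDefect τ z) := by
        gcongr
        exact abs_log_norm_cayley_le τ z hw
    _ = C ^ n * (8 * z.im) * cayleyDefect τ z ^ (n + 1) := by ring

end Decay

section OrbitSums

/-- The weight `Im τ / (1 + |τ|)²`, to which `cayleyDefect τ z` is comparable for `z` in a fixed
compact subset of the upper half-plane. -/
def heightDecay (τ : ℍ) : ℝ := τ.im / (1 + ‖(τ : ℂ)‖) ^ 2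

lemma heightDecay_nonneg (τ : ℍ) : 0 ≤ heightDecay τ := by
  unfold heightDecay
  positivity

lemma exists_cayleyDefect_le_mul_heightDecay {K : Set ℂ} (hK : IsCompact K) (hKU : K ⊆ UH) :
    ∃ C, 0 ≤ C ∧ ∀ z ∈ K, ∀ τ : ℍ, cayleyDefect τ z ≤ C * heightDecay τ := by
  have hcont : ContinuousOn (fun z : ℂ => (1 + ‖z‖) / z.im) K :=
    ContinuousOn.div (by fun_prop) (by fun_prop) fun z hz => ne_of_gt (hKU hz)
  obtain ⟨C, hC⟩ := hK.exists_bound_of_continuousOn hcont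
  refine ⟨(C + 1) ^ 2, by positivity, fun z hz τ => ?_⟩
  lift z to ℍ using hKU hz
  have hbound : 1 + ‖(z : ℂ)‖ ≤ C * z.im :=
    (div_le_iff₀ z.im_pos).1 ((le_abs_self _).trans (hC z hz))
  have hC0 : 0 ≤ C := (norm_nonneg _).trans (hC z hz)
  have hτ : ‖(τ : ℂ)‖ ≤ ‖(z : ℂ)‖ + ‖(z : ℂ) - conj (τ : ℂ)‖ := by
    simpa only [sub_sub_cancel, norm_conj] using norm_sub_le (z : ℂ) (z - conj (τ : ℂ))
  have hpos := norm_coe_sub_conj_pos τ z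
  have hle : 1 + ‖(τ : ℂ)‖ ≤ (C + 1) * ‖(z : ℂ) - conj (τ : ℂ)‖ := by
    linarith [mul_le_mul_of_nonneg_left (im_le_norm_coe_sub_conj τ z) hC0]
  rw [cayleyDefect, heightDecay, mul_div_assoc', div_le_div_iff₀ (by positivity) (by positivity)]
  calc τ.im * (1 + ‖(τ : ℂ)‖) ^ 2
      ≤ τ.im * ((C + 1) * ‖(z : ℂ) - conj (τ : ℂ)‖) ^ 2 := by gcongr
    _ = (C + 1) ^ 2 * τ.im * ‖(z : ℂ) - conj (τ : ℂ)‖ ^ 2 := by ring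

lemma summable_norm_inv_pow_pi_int {ι : Type*} [Fintype ι] {m : ℕ} (hm : Fintype.card ι < m) :
    Summable fun v : ι → ℤ => ‖v‖⁻¹ ^ m := by
  let L := Submodule.span ℤ (range (Pi.basisFun ℝ ι))
  have hmem (v : ι → ℤ) : (fun i => (v i : ℝ)) ∈ L :=
    ((Pi.basisFun ℝ ι).mem_span_iff_repr_mem ℤ _).2 fun i => ⟨v i, by simp⟩
  have hrank : Module.finrank ℤ L < m := by
    rwa [ZLattice.rank ℝ L, Module.finrank_fintype_fun_eq_card]
  have hinj : Function.Injective fun v : ι → ℤ => (⟨_, hmem v⟩ : L) := fun v w h => by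
    ext i
    exact Int.cast_injective (congrFun (congrArg Subtype.val h) i)
  have hnorm (v : ι → ℤ) : ‖fun i => (v i : ℝ)‖ = ‖v‖ := by
    simp [Pi.norm_def, ← Int.norm_cast_real, nnnorm]
  refine ((ZLattice.summable_norm_pow_inv L m hrank).comp_injective hinj).congr fun v => ?_
  simp [← hnorm]

/-- Three entries of `γ = (a b; c d)` which determine the matrix through `ad - bc = 1`.
All four entries would give a sum over `ℤ⁴`, which diverges for `k = 2`. -/
def entryTriple (γ : SL2Z) : Fin 3 → ℤ :=
  ![γ.1 0 0, γ.1 0 1, if γ.1 0 0 = 0 then γ.1 1 1 else γ.1 1 0]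

lemma entryTriple_injective : Function.Injective entryTriple := by
  intro g h hgh
  have ha : g.1 0 0 = h.1 0 0 := congrFun hgh 0
  have hb : g.1 0 1 = h.1 0 1 := congrFun hgh 1
  have hcd : (if g.1 0 0 = 0 then g.1 1 1 else g.1 1 0) =
    if h.1 0 0 = 0 then h.1 1 1 else h.1 1 0 := congrFun hgh 2
  have hg : g.1 0 0 * g.1 1 1 - g.1 0 1 * g.1 1 0 = 1 := (Matrix.det_fin_two g.1).symm.trans g.2
  have hh : h.1 0 0 * h.1 1 1 - h.1 0 1 * h.1 1 0 = 1 := (Matrix.det_fin_two h.1).symm.trans h.2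
  rw [← ha] at hcd hh
  rw [← hb] at hh
  have hcd' : g.1 1 0 = h.1 1 0 ∧ g.1 1 1 = h.1 1 1 := by
    split_ifs at hcd with ha0
    · have hb0 : g.1 0 1 ≠ 0 := fun hb0 => by simp [ha0, hb0] at hg
      exact ⟨mul_left_cancel₀ hb0 (by linear_combination hh - hg + g.1 0 0 * hcd), hcd⟩
    · exact ⟨hcd, mul_left_cancel₀ ha0 (by linear_combination hg - hh + g.1 0 1 * hcd)⟩
  ext i j
  fin_cases i <;> fin_cases j
  exacts [ha, hb, hcd'.1, hcd'.2]

instance countable_SL2Z : Countable SL2Z := entryTriple_injective.countable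

variable (ϱ : ℍ)

lemma heightDecay_smul (g : SL2Z) :
    heightDecay (g • ϱ) =
      ϱ.im / (‖(g.1 0 0 : ℂ) * ϱ + (g.1 0 1 : ℂ)‖ + ‖(g.1 1 0 : ℂ) * ϱ + (g.1 1 1 : ℂ)‖) ^ 2 := by
  have hpos := norm_pos_iff.2 (autFactor_coe_ne_zero g ϱ)
  rw [heightDecay, ModularGroup.im_smul_eq_div_normSq, ModularGroup.denom_apply, coe_smul_eq_moeb,
    moeb, norm_div, normSq_eq_norm_sq, ← autFactor]
  field_simp
  ring

lemma entryTriple_ne_zero (g : SL2Z) : entryTriple g ≠ 0 := by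
  intro h
  have ha : g.1 0 0 = 0 := congrFun h 0
  have hb : g.1 0 1 = 0 := congrFun h 1
  simpa [ha, hb] using intCast_det_eq_one g

lemma r_mul_norm_entryTriple_le (g : SL2Z) :
    EisensteinSeries.r ϱ * ‖entryTriple g‖ ≤
      ‖(g.1 0 0 : ℂ) * ϱ + (g.1 0 1 : ℂ)‖ + ‖(g.1 1 0 : ℂ) * ϱ + (g.1 1 1 : ℂ)‖ := by
  have hrow (i : Fin 2) : g.1 i ≠ 0 := g.row_ne_zero i
  have hentry (i j : Fin 2) : ‖g.1 i j‖ ≤ ‖g.1 0‖ + ‖g.1 1‖ := by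
    refine (norm_le_pi_norm (g.1 i) j).trans ?_
    fin_cases i <;> simp
  have htriple : ‖entryTriple g‖ ≤ ‖g.1 0‖ + ‖g.1 1‖ := by
    refine (pi_norm_le_iff_of_nonneg (by positivity)).2 fun i => ?_
    fin_cases i
    · exact hentry 0 0
    · exact hentry 0 1
    · change ‖if g.1 0 0 = 0 then g.1 1 1 else g.1 1 0‖ ≤ _
      split_ifs
      exacts [hentry 1 1, hentry 1 0]
  calc EisensteinSeries.r ϱ * ‖entryTriple g‖
      ≤ EisensteinSeries.r ϱ * ‖g.1 0‖ + EisensteinSeries.r ϱ * ‖g.1 1‖ := by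
        rw [← mul_add]
        exact mul_le_mul_of_nonneg_left htriple (EisensteinSeries.r_pos ϱ).le
    _ ≤ _ := add_le_add (EisensteinSeries.r_mul_max_le ϱ (hrow 0))
        (EisensteinSeries.r_mul_max_le ϱ (hrow 1))

lemma heightDecay_smul_le (g : SL2Z) :
    heightDecay (g • ϱ) ≤ ϱ.im / EisensteinSeries.r ϱ ^ 2 * ‖entryTriple g‖⁻¹ ^ 2 := by
  have hr := EisensteinSeries.r_pos ϱ
  have htriple := norm_pos_iff.2 (entryTriple_ne_zero g)
  calc heightDecay (g • ϱ) ≤ ϱ.im / (EisensteinSeries.r ϱ * ‖entryTriple g‖) ^ 2 := by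
        rw [heightDecay_smul]
        gcongr
        exact r_mul_norm_entryTriple_le ϱ g
    _ = ϱ.im / EisensteinSeries.r ϱ ^ 2 * ‖entryTriple g‖⁻¹ ^ 2 := by field_simp

lemma summable_heightDecay_pow {k : ℕ} (hk : 2 ≤ k) :
    Summable fun g : SL2Z => heightDecay (g⁻¹ • ϱ) ^ k := by
  have hlattice : Summable fun g : SL2Z => (‖entryTriple g‖⁻¹) ^ (2 * k) :=
    (summable_norm_inv_pow_pi_int (by rw [Fintype.card_fin]; lia)).comp_injective
      entryTriple_injective
  refine (Equiv.inv SL2Z).summable_iff (f := fun g => heightDecay (g • ϱ) ^ k) |>.2 ?_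
  refine (hlattice.mul_left ((ϱ.im / EisensteinSeries.r ϱ ^ 2) ^ k)).of_nonneg_of_le
    (fun g => pow_nonneg (heightDecay_nonneg _) k) fun g => ?_
  rw [pow_mul, ← mul_pow]
  exact pow_le_pow_left₀ (heightDecay_nonneg _) (heightDecay_smul_le ϱ g) k

lemma eventually_half_le_norm_cayley {K : Set ℂ} (hK : IsCompact K) (hKU : K ⊆ UH) :
    ∀ᶠ g : SL2Z in Filter.cofinite, ∀ z ∈ K, 1 / 2 ≤ ‖cayley (g⁻¹ • ϱ) z‖ := by
  obtain ⟨C, hC, hdefect⟩ := exists_cayleyDefect_le_mul_heightDecay hK hKU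
  obtain ⟨M, hM⟩ := hK.exists_bound_of_continuousOn continuous_im.continuousOn
  set ε := (8 * (|M| + 1) * (C + 1))⁻¹ with hε
  have hε0 : 0 < ε := by positivity
  have hsmall := (summable_heightDecay_pow ϱ le_rfl).tendsto_cofinite_zero.eventually_lt_const
    (pow_pos hε0 2)
  filter_upwards [hsmall] with g hg z hz
  lift z to ℍ using hKU hz
  have hdecay : heightDecay (g⁻¹ • ϱ) ≤ ε := (lt_of_pow_lt_pow_left₀ 2 hε0.le hg).le
  have him : z.im ≤ |M| + 1 := by
    linarith [le_abs_self M, (le_abs_self (z : ℂ).im).trans (hM z hz), UpperHalfPlane.coe_im z]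
  have hdecay0 := heightDecay_nonneg (g⁻¹ • ϱ)
  have hdefect0 := cayleyDefect_nonneg (g⁻¹ • ϱ) z
  have hbound : 4 * z.im * cayleyDefect (g⁻¹ • ϱ) z ≤ 1 / 2 :=
    calc 4 * z.im * cayleyDefect (g⁻¹ • ϱ) z
        ≤ 4 * (|M| + 1) * ((C + 1) * ε) := by
          gcongr
          refine (hdefect z hz _).trans ?_
          gcongr
          linarith
      _ = 1 / 2 := by
          rw [hε]
          field_simp
          norm_num
  linarith [one_sub_norm_cayley_le (g⁻¹ • ϱ) z]

lemma summable_geodesicPotential {n : ℕ} (hn : 1 ≤ n) (γ : SL2Z) (z : ℍ) :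
    Summable fun g : SL2Z => geodesicPotential n γ (g⁻¹ • ϱ) z := by
  obtain ⟨C, hC⟩ := exists_abs_geodesicPotential_le γ z n
  have hzU : ({(z : ℂ)} : Set ℂ) ⊆ UH := singleton_subset_iff.2 z.im_pos
  obtain ⟨D, -, hdefect⟩ := exists_cayleyDefect_le_mul_heightDecay isCompact_singleton hzU
  have hsum := (summable_heightDecay_pow ϱ (Nat.succ_le_succ hn)).mul_left (|C| * D ^ (n + 1))
  refine hsum.of_norm_bounded_eventually ?_
  filter_upwards [eventually_half_le_norm_cayley ϱ isCompact_singleton hzU] with g hg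
  have hdefect0 := cayleyDefect_nonneg (g⁻¹ • ϱ) z
  calc ‖geodesicPotential n γ (g⁻¹ • ϱ) z‖
      ≤ C * cayleyDefect (g⁻¹ • ϱ) z ^ (n + 1) := hC _ (hg z rfl)
    _ ≤ |C| * (D * heightDecay (g⁻¹ • ϱ)) ^ (n + 1) := by
        gcongr
        exacts [le_abs_self C, hdefect z rfl _]
    _ = |C| * D ^ (n + 1) * heightDecay (g⁻¹ • ϱ) ^ (n + 1) := by rw [mul_pow, mul_assoc]

lemma exists_eventually_norm_peterssonKernel_le {K : Set ℂ} (hK : IsCompact K) (hKU : K ⊆ UH) :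
    ∃ C, ∀ᶠ g : SL2Z in Filter.cofinite, ∀ z ∈ K,
      ‖peterssonKernel (g⁻¹ • ϱ) z‖ ≤ C * heightDecay (g⁻¹ • ϱ) := by
  obtain ⟨C, -, hdefect⟩ := exists_cayleyDefect_le_mul_heightDecay hK hKU
  refine ⟨4 * C, ?_⟩
  filter_upwards [eventually_half_le_norm_cayley ϱ hK hKU] with g hg z hz
  lift z to ℍ using hKU hz
  linarith [norm_peterssonKernel_le _ z (hg z hz), hdefect z hz (g⁻¹ • ϱ)]

end OrbitSums

section Pairing

variable {σ : ℝ → ℂ}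

lemma geodFactor_eq_ofReal_mul (k : ℕ) (γ : SL2Z) :
    geodFactor k γ = (((Real.sqrt (discr γ))⁻¹ ^ (k - 1) : ℝ) : ℂ) * I ^ (k - 1) := by
  rw [geodFactor, div_eq_inv_mul, mul_pow, ofReal_pow, ofReal_inv]

lemma coe_inv_smul_mem_orbit (ϱ : ℍ) (g : SL2Z) : ((g⁻¹ • ϱ : ℍ) : ℂ) ∈ orbit ϱ :=
  ⟨g⁻¹, coe_smul_eq_moeb _ _⟩

/-- The summand of `i ^ n η_{n+1,ϱ}(z) Q_γ(z, 1) ^ n` indexed by `g`, up to the factor `1 / 2`. -/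
def pairingTerm (n : ℕ) (γ : SL2Z) (ϱ : ℍ) (g : SL2Z) (z : ℂ) : ℂ :=
  I ^ n * (peterssonKernel (g⁻¹ • ϱ) z ^ (n + 1) * Qpoly γ z ^ n)

variable {n : ℕ} (γ : SL2Z) (ϱ : ℍ)

lemma tsum_pairingTerm (z : ℍ) :
    ∑' g, pairingTerm n γ ϱ g z = 2 * I ^ n * (etaP (n + 1) ϱ z * Qpoly γ z ^ n) := by
  simp only [pairingTerm, tsum_mul_left, tsum_mul_right, etaP, etaTerm_eq_peterssonKernel_pow]
  ring

lemma continuous_Qpoly : Continuous (Qpoly γ) := by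
  unfold Qpoly
  fun_prop

variable {ϱ} in
lemma continuousOn_pairingTerm {s : Set ℂ} (hs : s ⊆ UH \ orbit ϱ) (g : SL2Z) :
    ContinuousOn (pairingTerm n γ ϱ g) s :=
  continuousOn_const.mul <| ((continuousOn_peterssonKernel (fun _ hz => (hs hz).1)
    fun hz => (hs hz).2 (coe_inv_smul_mem_orbit ϱ g)).pow _).mul
      ((continuous_Qpoly γ).pow n).continuousOn

lemma exists_eventually_norm_pairingTerm_le (n : ℕ) {K : Set ℂ} (hK : IsCompact K) (hKU : K ⊆ UH) :
    ∃ C, ∀ᶠ g : SL2Z in Filter.cofinite, ∀ z ∈ K,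
      ‖pairingTerm n γ ϱ g z‖ ≤ C * heightDecay (g⁻¹ • ϱ) ^ (n + 1) := by
  obtain ⟨C, hC⟩ := exists_eventually_norm_peterssonKernel_le ϱ hK hKU
  obtain ⟨M, hM⟩ := hK.exists_bound_of_continuousOn ((continuous_Qpoly γ).pow n).continuousOn
  refine ⟨C ^ (n + 1) * M, ?_⟩
  filter_upwards [hC] with g hg z hz
  calc ‖pairingTerm n γ ϱ g z‖ = ‖peterssonKernel (g⁻¹ • ϱ) z‖ ^ (n + 1) * ‖Qpoly γ z ^ n‖ := by
        simp [pairingTerm]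
    _ ≤ (C * heightDecay (g⁻¹ • ϱ)) ^ (n + 1) * M := by
        gcongr
        exacts [pow_nonneg ((norm_nonneg _).trans (hg z hz)) _, hg z hz, hM z hz]
    _ = C ^ (n + 1) * M * heightDecay (g⁻¹ • ϱ) ^ (n + 1) := by ring

variable {ϱ}

lemma hasSum_pathInt_pairingTerm (hn : 1 ≤ n) (hσ : PiecewiseC1 σ)
    (hσin : σ '' Icc 0 1 ⊆ UH \ orbit ϱ) :
    HasSum (fun g => pathInt (pairingTerm n γ ϱ g) σ)
      (2 * I ^ n * pathInt (fun z => etaP (n + 1) ϱ z * Qpoly γ z ^ n) σ) := by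
  have hσU : σ '' Icc 0 1 ⊆ UH := hσin.trans sdiff_subset
  obtain ⟨C, hC⟩ := exists_eventually_norm_pairingTerm_le γ ϱ n
    (isCompact_Icc.image_of_continuousOn hσ.1) hσU
  have hsum := hasSum_pathInt hσ (continuousOn_pairingTerm γ hσin)
    ((summable_heightDecay_pow ϱ (Nat.succ_le_succ hn)).mul_left C) hC
  have htsum : EqOn (fun z => ∑' g, pairingTerm n γ ϱ g z)
      (fun z => 2 * I ^ n * (etaP (n + 1) ϱ z * Qpoly γ z ^ n)) (σ '' Icc 0 1) :=
    fun z hz => tsum_pairingTerm γ ϱ ⟨z, hσU hz⟩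
  rwa [pathInt_congr htsum, pathInt_const_mul] at hsum

lemma re_pathInt_pairingTerm (hσ : PiecewiseC1 σ) (hσin : σ '' Icc 0 1 ⊆ UH \ orbit ϱ)
    (g : SL2Z) :
    (pathInt (pairingTerm n γ ϱ g) σ).re =
      geodesicPotential n γ (g⁻¹ • ϱ) (σ 1) - geodesicPotential n γ (g⁻¹ • ϱ) (σ 0) := by
  refine re_pathInt_eq_sub hσ (continuousOn_pairingTerm γ hσin g) fun z hz => ?_
  lift z to ℍ using (hσin hz).1
  exact hasFDerivAt_geodesicPotential n γ
    (ne_of_mem_of_not_mem (coe_inv_smul_mem_orbit ϱ g) (hσin hz).2).symm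

variable (ϱ)

/-- Invariance of the potential turns the increments into the difference of two rearrangements of
the same absolutely convergent series. -/
lemma hasSum_geodesicPotential_moeb_sub (hn : 1 ≤ n) (z : ℍ) :
    HasSum (fun g : SL2Z => geodesicPotential n γ (g⁻¹ • ϱ) (moeb γ z) -
      geodesicPotential n γ (g⁻¹ • ϱ) z) 0 := by
  have hsum := (summable_geodesicPotential ϱ hn γ z).hasSum
  have hshift (g : SL2Z) : geodesicPotential n γ (g⁻¹ • ϱ) (moeb γ z) =
      geodesicPotential n γ ((g * γ)⁻¹ • ϱ) z := by
    rw [← geodesicPotential_smul, mul_inv_rev, mul_smul, smul_inv_smul]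
  simp only [hshift]
  simpa only [sub_self, Function.comp_apply, Equiv.coe_mulRight] using
    ((Equiv.mulRight γ).hasSum_iff.2 hsum).sub hsum

end Pairing

theorem etaP_geodesic_pairing_vanishes_general {k : ℕ} (hk : 2 ≤ k) {ϱ : ℂ} (hϱ : ϱ ∈ UH)
    (γ : SL2Z) {σ : ℝ → ℂ} (hσ : PiecewiseC1 σ) (h1 : σ 1 = moeb γ (σ 0))
    (hσin : ∀ t ∈ Icc (0 : ℝ) 1, σ t ∈ UH \ orbit ϱ) :
    (I ^ (k - 1) * pathInt (fun z => etaP k ϱ z * Qpoly γ z ^ (k - 1)) σ).re = 0 := by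
  obtain ⟨n, rfl⟩ : ∃ n, k = n + 1 := Nat.exists_eq_add_of_le' (by lia)
  have hn : 1 ≤ n := by lia
  have himage : σ '' Icc 0 1 ⊆ UH \ orbit ϱ := image_subset_iff.2 hσin
  lift ϱ to ℍ using hϱ
  obtain ⟨z₀, hz₀⟩ : ∃ z₀ : ℍ, (z₀ : ℂ) = σ 0 := ⟨⟨σ 0, (hσin 0 (by simp)).1⟩, rfl⟩
  have hpath := hasSum_re (hasSum_pathInt_pairingTerm γ hn hσ himage)
  simp only [re_pathInt_pairingTerm γ hσ himage, h1, ← hz₀] at hpath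
  have hzero := hpath.unique (hasSum_geodesicPotential_moeb_sub γ ϱ hn z₀)
  simpa [mul_assoc] using hzero

/-- The pairing of the Petersson Poincaré series `η_{k,ϱ}` with every closed geodesic on
`SL₂(ℤ)∖ℍ` vanishes: for every primitive hyperbolic `γ`, every base point `z₀` and every
piecewise `C¹` path `σ` in `ℍ ∖ SL₂(ℤ)ϱ` from `z₀` to `γz₀`,
`Re((i/√(d_γ))^(k−1) ∫_σ η_{k,ϱ}(z)·Q_γ(z,1)^(k−1) dz) = 0`. -/
theorem etaP_geodesic_pairing_vanishes (k : ℕ) (hk : 2 ≤ k) (ϱ : ℂ) (hϱ : ϱ ∈ UH)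
    (γ : SL2Z) (hhyp : IsHyperbolic γ) (hprim : IsPrimitive γ)
    (z₀ : ℂ) (hz₀ : z₀ ∈ UH \ orbit ϱ) (σ : ℝ → ℂ) (hσ : PiecewiseC1 σ)
    (h0 : σ 0 = z₀) (h1 : σ 1 = moeb γ z₀)
    (hσin : ∀ t ∈ Set.Icc (0 : ℝ) 1, σ t ∈ UH \ orbit ϱ) :
    (geodFactor k γ * pathInt (fun z => etaP k ϱ z * Qpoly γ z ^ (k - 1)) σ).re = 0 := by
  rw [geodFactor_eq_ofReal_mul, mul_assoc, re_ofReal_mul,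
    etaP_geodesic_pairing_vanishes_general hk hϱ γ hσ (h0 ▸ h1) hσin, mul_zero]
end
end

section
/- Assume m < 0 and define w(z) := 2|m|/p_z(X)² on ℍ (note p_z(X) ≠ 0 for all z ∈ ℍ since m < 0). Then for every z = x + iy ∈ ℍ one has ∂w/∂z (z) = −( i / √(4N|m|) ) · sgn(p_z(X)) · y^{−2} · conj(Q_X(z)) · w(z)^{3/2}, where ∂/∂z = (1/2)(∂/∂x − i·∂/∂y). -/
open Complex ComplexConjugate Metric Set MeasureTheory

noncomputable section

/-- `m = (b² − 4Nac)/(4N)`, the value `q(X)` of the quadratic form at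
`X = ((b/2N, c/N), (−a, −b/2N))`. -/
def mVal (N : ℕ) (a b c : ℝ) : ℝ := (b ^ 2 - 4 * N * a * c) / (4 * N)

/-- The quadratic polynomial `Q_X(z) = aNz² + bz + c`. -/
def Qx (N : ℕ) (a b c : ℝ) (z : ℂ) : ℂ := (a : ℂ) * (N : ℂ) * z ^ 2 + (b : ℂ) * z + (c : ℂ)

/-- The quantity `p_z(X) = (aN|z|² + bx + c)/(√(2N)·y)`. -/
def pX (N : ℕ) (a b c : ℝ) (z : ℂ) : ℝ :=
  (a * N * Complex.normSq z + b * z.re + c) / (Real.sqrt (2 * N) * z.im)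

/-- The argument `w(z) = 2|m|/p_z(X)²` of the hypergeometric series. -/
def wF (N : ℕ) (a b c : ℝ) (z : ℂ) : ℝ := 2 * |mVal N a b c| / (pX N a b c z) ^ 2

/-!
Since `w = 2|m| p⁻²`, the chain rule gives `∂w/∂z = -4|m| p⁻³ ∂p/∂z`. The quotient rule applied to
`p = (aN|z|² + bx + c) / (√(2N) y)` gives `∂p/∂z = i conj(Q_X(z)) / (2√(2N) y²)`, and
`p⁻³` is `sgn(p) w^(3/2)` up to the constant `(2|m|)^(3/2)`. When `m < 0`, `p` has no zeros because
`4aN (aN|z|² + bx + c) = (2aNx + b)² + (2aNy)² - 4Nm`.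
-/

section Wirtinger

variable {f g : ℂ → ℂ} {z : ℂ}

theorem dz_eq_of_hasFDerivAt {f' : ℂ →L[ℝ] ℂ} (hf : HasFDerivAt f f' z) :
    dz f z = 1 / 2 * (f' 1 - I * f' I) := by
  rw [dz, hf.fderiv]

theorem dz_continuousLinearMap (L : ℂ →L[ℝ] ℂ) (z : ℂ) : dz L z = 1 / 2 * (L 1 - I * L I) :=
  dz_eq_of_hasFDerivAt L.hasFDerivAt

theorem dz_add_const (f : ℂ → ℂ) (k z : ℂ) : dz (fun u => f u + k) z = dz f z := by
  rw [dz, dz, fderiv_add_const]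

theorem dz_add (hf : DifferentiableAt ℝ f z) (hg : DifferentiableAt ℝ g z) :
    dz (fun u => f u + g u) z = dz f z + dz g z := by
  rw [dz_eq_of_hasFDerivAt (hf.hasFDerivAt.fun_add hg.hasFDerivAt), dz, dz]
  simp only [add_apply]
  ring

theorem dz_mul (hf : DifferentiableAt ℝ f z) (hg : DifferentiableAt ℝ g z) :
    dz (fun u => f u * g u) z = f z * dz g z + dz f z * g z := by
  rw [dz_eq_of_hasFDerivAt (hf.hasFDerivAt.fun_mul hg.hasFDerivAt), dz, dz]
  simp only [add_apply, smul_apply, smul_eq_mul]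
  ring

theorem dz_const_mul (k : ℂ) (hf : DifferentiableAt ℝ f z) :
    dz (fun u => k * f u) z = k * dz f z := by
  rw [dz_eq_of_hasFDerivAt (hf.hasFDerivAt.const_mul k), dz]
  simp only [smul_apply, smul_eq_mul]
  ring

theorem dz_comp_of_hasDerivAt {h : ℂ → ℂ} {h' : ℂ} (hh : HasDerivAt h h' (f z))
    (hf : DifferentiableAt ℝ f z) : dz (fun u => h (f u)) z = h' * dz f z := by
  have hcomp : HasFDerivAt (fun u => h (f u)) (h' • fderiv ℝ f z) z :=
    hh.comp_hasFDerivAt z hf.hasFDerivAt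
  rw [dz_eq_of_hasFDerivAt hcomp, dz]
  simp only [smul_apply, smul_eq_mul]
  ring

theorem dz_div (hf : DifferentiableAt ℝ f z) (hg : DifferentiableAt ℝ g z) (hgz : g z ≠ 0) :
    dz (fun u => f u / g u) z = (dz f z * g z - f z * dz g z) / g z ^ 2 := by
  simp only [div_eq_mul_inv]
  rw [dz_mul hf (hg.fun_inv hgz), dz_comp_of_hasDerivAt (hasDerivAt_inv hgz) hg]
  field_simp
  ring

theorem dz_ofReal_re (z : ℂ) : dz (fun u => (u.re : ℂ)) z = 1 / 2 :=
  (dz_continuousLinearMap (ofRealCLM.comp reCLM) z).trans (by simp)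

theorem dz_ofReal_im (z : ℂ) : dz (fun u => (u.im : ℂ)) z = -I / 2 :=
  (dz_continuousLinearMap (ofRealCLM.comp imCLM) z).trans (by simp; ring)

theorem dz_id (z : ℂ) : dz (fun u => u) z = 1 :=
  (dz_continuousLinearMap (.id ℝ ℂ) z).trans (by norm_num)

theorem dz_conj (z : ℂ) : dz (fun u => conj u) z = 0 :=
  (dz_continuousLinearMap conjCLE.toContinuousLinearMap z).trans (by simp)

theorem dz_ofReal_normSq (z : ℂ) : dz (fun u => (normSq u : ℂ)) z = conj z := by
  simp only [← mul_conj]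
  rw [dz_mul (by fun_prop) (by fun_prop), dz_id, dz_conj]
  ring

end Wirtinger

section HermitianPolynomial

theorem differentiableAt_ofReal_normSq (z : ℂ) :
    DifferentiableAt ℝ (fun u : ℂ => (normSq u : ℂ)) z := by
  simp only [← mul_conj]
  fun_prop

theorem differentiableAt_normSq_add_re_add_const (A B C z : ℂ) :
    DifferentiableAt ℝ (fun u : ℂ => A * normSq u + B * u.re + C) z :=
  (((differentiableAt_ofReal_normSq z).const_mul A).add (by fun_prop)).add_const C

theorem differentiableAt_normSq_add_re_add_const_div_im (A B C : ℂ) {z : ℂ} (hz : z.im ≠ 0) :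
    DifferentiableAt ℝ (fun u : ℂ => (A * normSq u + B * u.re + C) / u.im) z := by
  have him : DifferentiableAt ℝ (fun u : ℂ => (u.im : ℂ)) z := by fun_prop
  simp only [div_eq_mul_inv]
  exact (differentiableAt_normSq_add_re_add_const A B C z).fun_mul
    (him.fun_inv (ofReal_ne_zero.mpr hz))

theorem dz_normSq_add_re_add_const (A B C z : ℂ) :
    dz (fun u => A * normSq u + B * u.re + C) z = A * conj z + B / 2 := by
  have hnormSq := differentiableAt_ofReal_normSq z
  rw [dz_add_const, dz_add (hnormSq.const_mul A) (by fun_prop), dz_const_mul A hnormSq,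
    dz_const_mul B (by fun_prop), dz_ofReal_normSq, dz_ofReal_re]
  ring

theorem normSq_add_re_add_const_ne_zero {A B C : ℝ} (hdiscrim : discrim A B C < 0) (z : ℂ) :
    A * normSq z + B * z.re + C ≠ 0 := by
  intro hzero
  have hsquares : (2 * A * z.re + B) ^ 2 + (2 * A * z.im) ^ 2 - discrim A B C = 0 :=
    calc
      _ = 4 * A * (A * normSq z + B * z.re + C) := by rw [normSq_apply, discrim]; ring
      _ = 0 := by rw [hzero, mul_zero]
  linarith [sq_nonneg (2 * A * z.re + B), sq_nonneg (2 * A * z.im)]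

end HermitianPolynomial

theorem sign_mul_div_sq_rpow_three_halves {k : ℝ} (hk : 0 ≤ k) (p : ℝ) :
    Real.sign p * (k / p ^ 2) ^ ((3 : ℝ) / 2) = √k ^ 3 / p ^ 3 := by
  have hrpow : (k / p ^ 2) ^ ((3 : ℝ) / 2) = (√k / |p|) ^ 3 := by
    rw [Real.rpow_div_two_eq_sqrt _ (by positivity), Real.sqrt_div hk, Real.sqrt_sq_eq_abs]
    exact_mod_cast Real.rpow_natCast (√k / |p|) 3
  rw [hrpow]
  rcases lt_trichotomy p 0 with hneg | rfl | hpos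
  · rw [Real.sign_of_neg hneg, abs_of_neg hneg]
    ring
  · simp
  · rw [Real.sign_of_pos hpos, abs_of_pos hpos, one_mul, div_pow]

section QuadraticSpace

variable (N : ℕ) (a b c : ℝ) {z : ℂ}

variable {N a b c} in
theorem pX_ne_zero (hm : mVal N a b c < 0) (hz : z.im ≠ 0) : pX N a b c z ≠ 0 := by
  have hN : (0 : ℝ) < N := by
    refine N.cast_nonneg.lt_of_ne' fun hzero => hm.ne ?_
    rw [mVal, hzero, mul_zero, div_zero]
  have hdiscrim : discrim (a * N) b c < 0 := by
    have hdiscrim_eq : discrim (a * N) b c = 4 * N * mVal N a b c := by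
      rw [discrim, mVal]
      field_simp
    rw [hdiscrim_eq]
    exact mul_neg_of_pos_of_neg (by positivity) hm
  exact div_ne_zero (normSq_add_re_add_const_ne_zero hdiscrim z) (by positivity)

theorem ofReal_pX (z : ℂ) :
    (pX N a b c z : ℂ) = (√(2 * N) : ℂ)⁻¹ * ((a * N * normSq z + b * z.re + c) / z.im) := by
  rw [pX]
  push_cast
  rw [div_mul_eq_div_div_swap, div_eq_inv_mul]

theorem differentiableAt_ofReal_pX (hz : z.im ≠ 0) :
    DifferentiableAt ℝ (fun u => (pX N a b c u : ℂ)) z := by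
  simp only [ofReal_pX]
  exact (differentiableAt_normSq_add_re_add_const_div_im _ _ _ hz).const_mul _

theorem conj_Qx (z : ℂ) :
    conj (Qx N a b c z) =
      a * N * normSq z + b * z.re + c - 2 * I * z.im * (a * N * conj z + b / 2) := by
  rw [Qx, ← mul_conj, re_eq_add_conj, im_eq_sub_conj]
  simp only [map_add, map_mul, map_pow, conj_ofReal, conj_natCast]
  field_simp
  ring

theorem dz_pX (hz : z.im ≠ 0) :
    dz (fun u => (pX N a b c u : ℂ)) z =
      I / (2 * √(2 * N) * z.im ^ 2) * conj (Qx N a b c z) := by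
  have hnum := differentiableAt_normSq_add_re_add_const (a * N) b c z
  simp only [ofReal_pX]
  rw [dz_const_mul _ (differentiableAt_normSq_add_re_add_const_div_im _ _ _ hz),
    dz_div hnum (by fun_prop) (ofReal_ne_zero.mpr hz),
    dz_normSq_add_re_add_const, dz_ofReal_im, conj_Qx]
  linear_combination ((√(2 * N) : ℂ)⁻¹ * (a * N * conj z + b / 2) * z.im / z.im ^ 2) * I_sq

theorem dz_wF_eq_div_pX_cube (hz : z.im ≠ 0) (hp : pX N a b c z ≠ 0) :
    dz (fun u => (wF N a b c u : ℂ)) z =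
      -(2 * |mVal N a b c| * I / (√(2 * N) * z.im ^ 2)) * conj (Qx N a b c z) /
        pX N a b c z ^ 3 := by
  have hp' : (pX N a b c z : ℂ) ≠ 0 := ofReal_ne_zero.mpr hp
  have houter : HasDerivAt (fun p : ℂ => 2 * |mVal N a b c| / p ^ 2)
      (-(4 * |mVal N a b c|) / (pX N a b c z : ℂ) ^ 3) (pX N a b c z) := by
    have hinv_sq := (hasDerivAt_pow 2 (pX N a b c z : ℂ)).fun_inv (pow_ne_zero 2 hp')
    refine (hinv_sq.const_mul (2 * |mVal N a b c| : ℂ)).congr_deriv ?_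
    push_cast
    field_simp
    ring
  simp only [wF, ofReal_div, ofReal_mul, ofReal_pow, ofReal_ofNat]
  rw [dz_comp_of_hasDerivAt houter (differentiableAt_ofReal_pX N a b c hz), dz_pX N a b c hz]
  ring

theorem dz_wF_general (hm : mVal N a b c ≠ 0) (hz : z.im ≠ 0) (hp : pX N a b c z ≠ 0) :
    dz (fun u => (wF N a b c u : ℂ)) z =
      -(I / √(4 * N * |mVal N a b c|)) * Real.sign (pX N a b c z) * ((z.im : ℂ) ^ 2)⁻¹ *
        conj (Qx N a b c z) * (wF N a b c z ^ ((3 : ℝ) / 2) : ℝ) := by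
  have hsqrt_mul : √(4 * N * |mVal N a b c|) = √(2 * N) * √(2 * |mVal N a b c|) := by
    rw [← Real.sqrt_mul (by positivity)]
    ring_nf
  have hsign_rpow : (Real.sign (pX N a b c z) : ℂ) * (wF N a b c z ^ ((3 : ℝ) / 2) : ℝ) =
      (√(2 * |mVal N a b c|) : ℂ) ^ 3 / (pX N a b c z : ℂ) ^ 3 := by
    exact_mod_cast sign_mul_div_sq_rpow_three_halves (by positivity) (pX N a b c z)
  have hsq : (2 * |mVal N a b c| : ℂ) = (√(2 * |mVal N a b c|) : ℂ) ^ 2 := by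
    exact_mod_cast (Real.sq_sqrt (by positivity : 0 ≤ 2 * |mVal N a b c|)).symm
  have hsqrt_ne : (√(2 * |mVal N a b c|) : ℂ) ≠ 0 :=
    ofReal_ne_zero.mpr (Real.sqrt_ne_zero'.mpr (by positivity))
  rw [dz_wF_eq_div_pX_cube N a b c hz hp, hsq, hsqrt_mul, ofReal_mul]
  calc
    _ = -(I / (√(2 * N) * √(2 * |mVal N a b c|))) * ((z.im : ℂ) ^ 2)⁻¹ * conj (Qx N a b c z) *
          ((√(2 * |mVal N a b c|) : ℂ) ^ 3 / (pX N a b c z : ℂ) ^ 3) := by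
      field_simp
    _ = _ := by
      rw [← hsign_rpow]
      ring

end QuadraticSpace

/-- For `m < 0`, the function `w(z) = 2|m|/p_z(X)²` satisfies
`∂w/∂z = −(i/√(4N|m|))·sgn(p_z(X))·y^(−2)·conj(Q_X(z))·w(z)^(3/2)` on `ℍ`
(and `p_z(X) ≠ 0` throughout `ℍ`). -/
theorem dz_wF (N : ℕ) (hN : 1 ≤ N) (a b c : ℝ) (hm : mVal N a b c < 0) :
    (∀ z ∈ UH, pX N a b c z ≠ 0) ∧
    (∀ z ∈ UH, dz (fun w => ((wF N a b c w : ℝ) : ℂ)) z =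
      -(Complex.I / ((Real.sqrt (4 * N * |mVal N a b c|) : ℝ) : ℂ)) *
        ((Real.sign (pX N a b c z) : ℝ) : ℂ) * (((z.im : ℂ) ^ (2 : ℕ))⁻¹) *
        conj (Qx N a b c z) * ((wF N a b c z ^ ((3 : ℝ) / 2) : ℝ) : ℂ)) := by
  exact ⟨fun z hz => pX_ne_zero hm (ne_of_gt hz), fun z hz =>
    dz_wF_general N a b c hm.ne (ne_of_gt hz) (pX_ne_zero hm (ne_of_gt hz))⟩
end
end
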